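/- Let H and E be finite-dimensional Euclidean spaces, X ⊂ H and K ⊂ E compact subsets containing the origins, and S: H × E → H a C²-smooth map with S(0,0) = 0 and S(X × K) ⊂ X. Assume that the RDS u_k = S(u_{k−1}, η_k) satisfies: (Dissipativity) for every ε > 0 there is n_ε ≥ 1 such that |S_{n_ε}(u; 0, …, 0)| ≤ ε for all u ∈ X; (Linearised controllability) D_η S(u, η): E → H is surjective for every u ∈ X and η ∈ K. Let {η_k, k ∈ ℤ} be a stationary process in E with D(η_k) supported by K, let 𝐊 = K^{ℤ₋} with the weighted metric d(𝛏, 𝛏′) = Σ_{k ∈ ℤ₋} ι^k |ξ_k − ξ′_k| (ι > 1 fixed), let σ be the law of (η_k, k ∈ ℤ₋), ℰ = supp σ ⊂ 𝐊, and let Q(𝛏;·) be the conditional law of η₁ given the past η_k = ξ_k, k ∈ ℤ₋, chosen continuous from ℰ to P(K) (Feller property). Assume further: (Lipschitz regularity) there is a function ρ: ℰ × E → ℝ₊, Lipschitz continuous in both variables, such that Q(𝛏; dy) = ρ(𝛏, y) ℓ(dy) for all 𝛏 ∈ ℰ; (Recurrence to zero) for every n ≥ 1 and δ > 0 there is s ≥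 1 such that inf_{𝛏 ∈ ℰ} 𝐐_s^n(𝛏; O_δ(0_n)) > 0, where 𝐐_s^n(𝛏;·) is the projection to the last n components of the conditional law 𝐐_{s+n}(𝛏;·) of (η₁, …, η_{s+n}) given the past 𝛏, and O_δ(0_n) is the n-fold product of B_E(0, δ). Then there exist a translation-invariant measure 𝛍 on X^ℤ and γ > 0 such that for every m ≥ 0 there is C_m > 0, not depending on the initial state, such that for every u ∈ X the trajectory {u_k} of u_k = S(u_{k−1}, η_k), u_0 = u, satisfies ‖D([u_k, …, u_{k+m}]) − 𝛍_m‖_var ≤ C_m e^{−γ k} for all k ≥ 0, where 𝛍_m is the projection of 𝛍 to X^{m+1}. -/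

import Mathlib

open MeasureTheory ProbabilityTheory Set Metric

/-- The trajectory of the system `u_k = S(u_{k-1}, ζ_k)` issued from `u₀`. -/
def traj {H E : Type*} (S : H × E → H) (u₀ : H) (ζ : ℕ → E) : ℕ → H
  | 0 => u₀
  | k + 1 => S (traj S u₀ ζ k, ζ (k + 1))

/-- The support of a measure on a topological space. -/
def msupport {α : Type*} [TopologicalSpace α] [MeasurableSpace α] (σ : Measure α) : Set α :=
  {x | ∀ U : Set α, IsOpen U → x ∈ U → 0 < σ U}

/-- A past `ξp = (ξ_k, k ≤ 0)` (encoded by `ξp n = ξ_{-n}`) updated by a new observation `y`. -/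
def seqAppend {E : Type*} (ξp : ℕ → E) (y : E) : ℕ → E
  | 0 => y
  | n + 1 => ξp n

/-- The weighted metric `d(ξp,ξp') = Σ_{k ∈ ℤ₋} ι^k |ξ_k − ξ'_k|` on the space of pasts
(encoded by `ξp n = ξ_{-n}`). -/
noncomputable def dPast {E : Type*} [NormedAddCommGroup E] (ι : ℝ) (x y : ℕ → E) : ℝ :=
  ∑' n : ℕ, (ι ^ n)⁻¹ * ‖x n - y n‖

/-- The conditional law `𝐐_k(ξp; dy₁, …, dy_k) = Q(ξp; dy₁) Q((ξp,y₁); dy₂) ⋯` of the next `k`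
observations given the past `ξp`. -/
noncomputable def Qchain {E : Type*} [MeasurableSpace E]
    (Q : (ℕ → E) → Measure E) : (k : ℕ) → (ℕ → E) → Measure (Fin k → E)
  | 0, _ => Measure.dirac (fun i : Fin 0 => i.elim0)
  | k + 1, ξp => (Q ξp).bind fun y => (Qchain Q k (seqAppend ξp y)).map (Fin.cons y)

open MeasureTheory ProbabilityTheory Set Metric

namespace EMix

/-- integral comparison under a sub-measure -/
lemma int_mono_le {α : Type*} [MeasurableSpace α] {Q lam : Measure α} [IsProbabilityMeasure Q]
    (hle : lam ≤ Q) {h : α → ℝ} (hi : Integrable h Q) (c : ℝ) (hc : ∀ᵐ x ∂Q, c ≤ h x) :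
    ∫ x, h x ∂lam + c * (1 - lam.real univ) ≤ ∫ x, h x ∂Q := by
  haveI : IsFiniteMeasure lam := ⟨(hle univ).trans_lt (measure_lt_top Q univ)⟩
  have hi' : Integrable h lam := hi.mono_measure hle
  have h1 : ∫ x, (h x - c) ∂lam ≤ ∫ x, (h x - c) ∂Q := by
    apply integral_mono_measure hle
    · filter_upwards [hc] with x hx
      simpa using hx
    · exact hi.sub (integrable_const c)
  rw [integral_sub hi (integrable_const c), integral_sub hi' (integrable_const c)] at h1
  simp at h1
  linarith

lemma int_mono_ge {α : Type*} [MeasurableSpace α] {Q lam : Measure α} [IsProbabilityMeasure Q]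
    (hle : lam ≤ Q) {h : α → ℝ} (hi : Integrable h Q) (c : ℝ) (hc : ∀ᵐ x ∂Q, h x ≤ c) :
    ∫ x, h x ∂Q ≤ ∫ x, h x ∂lam + c * (1 - lam.real univ) := by
  have := int_mono_le hle hi.neg (-c) (by filter_upwards [hc] with x hx; simpa using hx)
  simp only [Pi.neg_apply, integral_neg] at this
  linarith

lemma minorize {α β : Type*} [MeasurableSpace α] [MeasurableSpace β]
    {Q Q' : Measure α} [IsProbabilityMeasure Q] [IsProbabilityMeasure Q']
    (ν : Measure β) [IsFiniteMeasure ν] {g g' : β → α} (hg : AEMeasurable g ν)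
    (hg' : AEMeasurable g' ν) (hle : ν.map g ≤ Q) (hle' : ν.map g' ≤ Q')
    {h h' : α → ℝ} (hi : Integrable h Q) (hi' : Integrable h' Q') (lo a t : ℝ)
    (hb : ∀ᵐ x ∂Q, h x ≤ lo + a) (hb' : ∀ᵐ x ∂Q', lo ≤ h' x)
    (ht : ∀ᵐ b ∂ν, h (g b) - h' (g' b) ≤ t) :
    ∫ x, h x ∂Q - ∫ x, h' x ∂Q' ≤ t * ν.real univ + a * (1 - ν.real univ) := by
  have h1 := int_mono_ge hle hi _ hb
  have h2 := int_mono_le hle' hi' _ hb'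
  have hj : Integrable h (ν.map g) := hi.mono_measure hle
  have hj' : Integrable h' (ν.map g') := hi'.mono_measure hle'
  rw [integral_map hg hj.1] at h1
  rw [integral_map hg' hj'.1] at h2
  have e1 : (ν.map g).real univ = ν.real univ := by
    simp [measureReal_def, Measure.map_apply_of_aemeasurable hg MeasurableSet.univ]
  have e2 : (ν.map g').real univ = ν.real univ := by
    simp [measureReal_def, Measure.map_apply_of_aemeasurable hg' MeasurableSet.univ]
  rw [e1] at h1
  rw [e2] at h2
  have k1 : Integrable (fun b => h (g b)) ν := (integrable_map_measure hj.1 hg).1 hj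
  have k2 : Integrable (fun b => h' (g' b)) ν := (integrable_map_measure hj'.1 hg').1 hj'
  have h3 : ∫ b, (h (g b) - h' (g' b)) ∂ν ≤ ∫ b, t ∂ν :=
    integral_mono_ae (k1.sub k2) (integrable_const t) ht
  rw [integral_sub k1 k2] at h3
  simp at h3
  nlinarith

end EMix

open MeasureTheory ProbabilityTheory Set Metric

namespace EMix

section past
variable {E : Type*} [NormedAddCommGroup E]

lemma summable_past {ι : ℝ} (hι : 1 < ι) {x y : ℕ → E} {R : ℝ}
    (hx : ∀ n, ‖x n‖ ≤ R) (hy : ∀ n, ‖y n‖ ≤ R) :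
    Summable fun n : ℕ => (ι ^ n)⁻¹ * ‖x n - y n‖ := by
  have h0 : 0 < ι := by linarith
  have hg : Summable fun n : ℕ => (ι⁻¹) ^ n * (2 * R) :=
    (summable_geometric_of_lt_one (by positivity) (inv_lt_one_of_one_lt₀ hι)).mul_right _
  refine Summable.of_nonneg_of_le (fun n => by positivity) (fun n => ?_) hg
  rw [inv_pow]
  gcongr
  have := norm_sub_le (x n) (y n)
  linarith [hx n, hy n]

lemma dPast_nonneg {ι : ℝ} (hι : 1 < ι) (x y : ℕ → E) : 0 ≤ dPast ι x y := by
  have h0 : 0 < ι := by linarith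
  exact tsum_nonneg (fun n => by positivity)

lemma dPast_append {ι : ℝ} (hι : 1 < ι) {x y : ℕ → E} {R : ℝ}
    (hx : ∀ n, ‖x n‖ ≤ R) (hy : ∀ n, ‖y n‖ ≤ R) (u v : E) :
    dPast ι (seqAppend x u) (seqAppend y v) = ‖u - v‖ + ι⁻¹ * dPast ι x y := by
  have h0 : 0 < ι := by linarith
  have hs := summable_past hι hx hy
  have hs' : Summable fun n : ℕ => (ι ^ n)⁻¹ * ‖seqAppend x u n - seqAppend y v n‖ := by
    rw [← summable_nat_add_iff 1]
    refine (hs.mul_left ι⁻¹).congr (fun n => ?_)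
    simp only [seqAppend]
    rw [pow_succ, mul_inv]; ring
  unfold dPast
  rw [hs'.tsum_eq_zero_add, ← tsum_mul_left]
  congr 1
  · simp [seqAppend]
  · apply tsum_congr
    intro n
    simp only [seqAppend]
    rw [pow_succ, mul_inv]; ring

lemma dPast_tri {ι : ℝ} (hι : 1 < ι) {x y : ℕ → E} {R : ℝ} (hR : 0 ≤ R)
    (hx : ∀ n, ‖x n‖ ≤ R) (hy : ∀ n, ‖y n‖ ≤ R) :
    dPast ι x y ≤ dPast ι x (fun _ => 0) + dPast ι y (fun _ => 0) := by
  have h0 : 0 < ι := by linarith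
  have hz : ∀ n : ℕ, ‖(fun _ : ℕ => (0 : E)) n‖ ≤ R := fun n => by simpa using hR
  unfold dPast
  rw [← (summable_past hι hx hz).tsum_add (summable_past hι hy hz)]
  refine (summable_past hι hx hy).tsum_le_tsum (fun n => ?_)
    ((summable_past hι hx hz).add (summable_past hι hy hz))
  rw [← mul_add]
  gcongr
  simpa using norm_sub_le (x n) (y n)

lemma append_tail {E : Type*} (x : ℕ → E) : seqAppend (fun n => x (n + 1)) (x 0) = x := by
  funext n
  cases n <;> rfl

lemma dPast_small_aux {ι : ℝ} (hι : 1 < ι) {R : ℝ} (hR : 0 ≤ R) {δ : ℝ} (hδ : 0 ≤ δ) (n : ℕ) :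
    ∀ x : ℕ → E, (∀ k, ‖x k‖ ≤ R) → (∀ k < n, ‖x k‖ ≤ δ) →
    dPast ι x (fun _ => 0) ≤ δ * (1 - ι⁻¹)⁻¹ + (ι⁻¹) ^ n * (R * (1 - ι⁻¹)⁻¹) := by
  have h0 : 0 < ι := by linarith
  have h1 : 0 < 1 - ι⁻¹ := by linarith [inv_lt_one_of_one_lt₀ hι]
  induction n with
  | zero =>
    intro x hx _
    have hz : ∀ n : ℕ, ‖(fun _ : ℕ => (0 : E)) n‖ ≤ R := fun n => by simpa using hR
    have hg := hasSum_geometric_of_lt_one (r := ι⁻¹) (by positivity) (inv_lt_one_of_one_lt₀ hι)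
    have : dPast ι x (fun _ => 0) ≤ R * (1 - ι⁻¹)⁻¹ := by
      unfold dPast
      rw [← (hg.mul_left R).tsum_eq]
      refine (summable_past hι hx hz).tsum_le_tsum (fun n => ?_) (hg.mul_left R).summable
      rw [inv_pow, mul_comm]
      gcongr
      simpa using hx n
    have : 0 ≤ δ * (1 - ι⁻¹)⁻¹ := by positivity
    simp
    linarith
  | succ n ih =>
    intro x hx hd
    have h := ih (fun k => x (k + 1)) (fun k => hx _) (fun k hk => hd _ (by omega))
    have hz : ∀ n : ℕ, ‖(fun _ : ℕ => (0 : E)) n‖ ≤ R := fun n => by simpa using hR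
    have e := dPast_append hι (x := fun k => x (k + 1)) (fun k => hx _) hz (x 0) 0
    rw [append_tail x] at e
    have e2 : seqAppend (fun _ : ℕ => (0 : E)) 0 = fun _ => 0 := by
      funext n; cases n <;> rfl
    rw [e2] at e
    rw [e]
    have hx0 : ‖x 0 - 0‖ ≤ δ := by simpa using hd 0 (by omega)
    have hi : 0 < ι⁻¹ := by positivity
    calc ‖x 0 - 0‖ + ι⁻¹ * dPast ι (fun k => x (k + 1)) (fun _ => 0)
        ≤ δ + ι⁻¹ * (δ * (1 - ι⁻¹)⁻¹ + (ι⁻¹) ^ n * (R * (1 - ι⁻¹)⁻¹)) := by gcongr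
      _ = δ * (1 - ι⁻¹)⁻¹ + (ι⁻¹) ^ (n + 1) * (R * (1 - ι⁻¹)⁻¹) := by
        have hc : (1 - ι⁻¹) * (1 - ι⁻¹)⁻¹ = 1 := mul_inv_cancel₀ h1.ne'
        rw [pow_succ]
        linear_combination (-δ) * hc

lemma dPast_small {ι : ℝ} (hι : 1 < ι) {R : ℝ} (hR : 0 ≤ R) {τ : ℝ} (hτ : 0 < τ) :
    ∃ n₀ : ℕ, ∃ δ₀ > 0, ∀ n ≥ n₀, ∀ δ ≤ δ₀, 0 ≤ δ →
    ∀ x : ℕ → E, (∀ k, ‖x k‖ ≤ R) → (∀ k < n, ‖x k‖ ≤ δ) → dPast ι x (fun _ => 0) ≤ τ := by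
  have h0 : 0 < ι := by linarith
  have h1 : 0 < 1 - ι⁻¹ := by linarith [inv_lt_one_of_one_lt₀ hι]
  have ht : Filter.Tendsto (fun n : ℕ => (ι⁻¹) ^ n * (R * (1 - ι⁻¹)⁻¹)) Filter.atTop
      (nhds (0 * (R * (1 - ι⁻¹)⁻¹))) :=
    (tendsto_pow_atTop_nhds_zero_of_lt_one (by positivity) (inv_lt_one_of_one_lt₀ hι)).mul_const _
  rw [zero_mul] at ht
  obtain ⟨n₀, hn₀⟩ := Filter.eventually_atTop.1 (ht.eventually_lt_const (half_pos hτ))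
  refine ⟨n₀, τ / 2 * (1 - ι⁻¹), by positivity, fun n hn δ hδ hδ0 x hx hd => ?_⟩
  have := dPast_small_aux hι hR hδ0 n x hx hd
  have h3 : δ * (1 - ι⁻¹)⁻¹ ≤ τ / 2 := by
    rw [← div_eq_mul_inv, div_le_iff₀ h1]; exact hδ
  linarith [hn₀ n hn]

lemma dPast_continuousOn {ι : ℝ} (hι : 1 < ι) (R : ℝ) {y : ℕ → E} (hy : ∀ n, ‖y n‖ ≤ R) :
    ContinuousOn (fun x => dPast ι x y) {x : ℕ → E | ∀ n, ‖x n‖ ≤ R} := by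
  have h0 : 0 < ι := by linarith
  have hg : Summable fun n : ℕ => (ι⁻¹) ^ n * (2 * R) :=
    (summable_geometric_of_lt_one (by positivity) (inv_lt_one_of_one_lt₀ hι)).mul_right _
  refine continuousOn_tsum (u := fun n : ℕ => (ι⁻¹) ^ n * (2 * R)) (fun n => ?_) hg ?_
  · fun_prop
  · intro n x hx
    rw [Real.norm_of_nonneg (by positivity), inv_pow]
    gcongr
    have := norm_sub_le (x n) (y n)
    linarith [hx n, hy n]

lemma dPast_self (ι : ℝ) (x : ℕ → E) : dPast ι x x = 0 := by simp [dPast]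

lemma continuous_append : Continuous fun p : (ℕ → E) × E => seqAppend p.1 p.2 := by
  refine continuous_pi (fun n => ?_)
  cases n with
  | zero => exact continuous_snd
  | succ n => exact (continuous_apply n).comp continuous_fst

lemma measurable_append {E : Type*} [MeasurableSpace E] :
    Measurable fun p : (ℕ → E) × E => seqAppend p.1 p.2 := by
  refine measurable_pi_lambda _ (fun n => ?_)
  cases n with
  | zero => exact measurable_snd
  | succ n => exact (measurable_pi_apply n).comp measurable_fst

/-- Lipschitz in `dPast` implies continuity in the product topology. -/
lemma rho_continuousOn {ι : ℝ} (hι : 1 < ι) {R : ℝ} {A : Set (ℕ → E)}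
    (hA : ∀ ξ ∈ A, ∀ n, ‖ξ n‖ ≤ R) {ρ : (ℕ → E) → E → ℝ} {L : ℝ}
    (hL : ∀ ξ ∈ A, ∀ ξ' ∈ A, ∀ y y', |ρ ξ y - ρ ξ' y'| ≤ L * (dPast ι ξ ξ' + ‖y - y'‖)) :
    ContinuousOn (fun p : (ℕ → E) × E => ρ p.1 p.2) (A ×ˢ univ) := by
  rintro ⟨ξ, y⟩ ⟨hξ, -⟩
  unfold ContinuousWithinAt
  rw [tendsto_iff_norm_sub_tendsto_zero]
  have h1 : ContinuousWithinAt (fun p : (ℕ → E) × E => L * (dPast ι p.1 ξ + ‖p.2 - y‖))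
      (A ×ˢ univ) (ξ, y) := by
    refine ContinuousWithinAt.mul continuousWithinAt_const (ContinuousWithinAt.add ?_ ?_)
    · refine ContinuousWithinAt.comp (f := Prod.fst) (x := (ξ, y)) (g := fun x => dPast ι x ξ) (t := {x : ℕ → E | ∀ n, ‖x n‖ ≤ R})
        (dPast_continuousOn hι R (hA ξ hξ) ξ (hA ξ hξ)) continuousWithinAt_fst ?_
      rintro ⟨p, q⟩ ⟨hp, -⟩
      exact hA p hp
    · fun_prop
  have h2 := h1.tendsto
  simp only [dPast_self, sub_self, norm_zero, add_zero, mul_zero] at h2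
  refine squeeze_zero' (Filter.Eventually.of_forall fun _ => norm_nonneg _) ?_ h2
  filter_upwards [self_mem_nhdsWithin] with p hp
  exact hL p.1 hp.1 ξ hξ p.2 y

end past

end EMix

open MeasureTheory ProbabilityTheory Set Metric

namespace EMix

set_option linter.unusedSectionVars false

section chain
variable {H E : Type*}
    [NormedAddCommGroup H] [InnerProductSpace ℝ H] [FiniteDimensional ℝ H]
    [MeasurableSpace H] [BorelSpace H]
    [NormedAddCommGroup E] [InnerProductSpace ℝ E] [FiniteDimensional ℝ E]
    [MeasureSpace E] [BorelSpace E]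

/-- The standing assumptions on the system and on the (regularised) conditional law. -/
structure NoiseData (X : Set H) (K : Set E) (S : H × E → H) (ι R : ℝ) (Sp : Set (ℕ → E))
    (κ : Kernel (ℕ → E) E) (ρ : (ℕ → E) → E → ℝ) (L : ℝ) : Prop where
  hX : IsCompact X
  hK : IsCompact K
  hS : Continuous S
  hinv : ∀ u ∈ X, ∀ y ∈ K, S (u, y) ∈ X
  hι : 1 < ι
  hR : 0 ≤ R
  hKR : ∀ y ∈ K, ‖y‖ ≤ R
  hcl : IsClosed Sp
  hsub : ∀ ξ ∈ Sp, ∀ n, ξ n ∈ K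
  hρ : ∀ ξ y, 0 ≤ ρ ξ y
  hL : 0 ≤ L
  hlip : ∀ ξ ∈ Sp, ∀ ξ' ∈ Sp, ∀ y y', |ρ ξ y - ρ ξ' y'| ≤ L * (dPast ι ξ ξ' + ‖y - y'‖)
  hdens : ∀ ξ ∈ Sp, κ ξ = volume.withDensity fun y => ENNReal.ofReal (ρ ξ y)
  happ : ∀ ξ ∈ Sp, ∀ᵐ y ∂(κ ξ), seqAppend ξ y ∈ Sp

/-- One step of the extended chain (history of states, history of noise). -/
def step (S : H × E → H) (w : (ℕ → H) × (ℕ → E)) (y : E) : (ℕ → H) × (ℕ → E) :=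
  (seqAppend w.1 (S (w.1 0, y)), seqAppend w.2 y)

/-- The good set of the extended phase space. -/
def Good (X : Set H) (Sp : Set (ℕ → E)) : Set ((ℕ → H) × (ℕ → E)) :=
  {w | (∀ i, w.1 i ∈ X) ∧ w.2 ∈ Sp}

lemma measurable_step {S : H × E → H} (hS : Continuous S) :
    Measurable fun p : ((ℕ → H) × (ℕ → E)) × E => step S p.1 p.2 := by
  unfold step
  refine Measurable.prodMk ?_ ?_
  · refine measurable_append.comp (Measurable.prodMk (by fun_prop) (hS.measurable.comp ?_))
    refine Measurable.prodMk ?_ measurable_snd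
    exact (measurable_pi_apply 0).comp (measurable_fst.comp measurable_fst)
  · exact measurable_append.comp
      ((measurable_snd.comp measurable_fst).prodMk measurable_snd)

/-- The transition kernel of the extended chain. -/
noncomputable def chainK (S : H × E → H) (κ : Kernel (ℕ → E) E) :
    Kernel ((ℕ → H) × (ℕ → E)) ((ℕ → H) × (ℕ → E)) :=
  (Kernel.id ×ₖ (κ.comap Prod.snd measurable_snd)).map fun p => step S p.1 p.2

variable {X : Set H} {K : Set E} {S : H × E → H} {ι R : ℝ} {Sp : Set (ℕ → E)}
    {κ : Kernel (ℕ → E) E} {ρ : (ℕ → E) → E → ℝ} {L : ℝ}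

lemma chainK_apply [IsMarkovKernel κ] (hS : Continuous S) (w : (ℕ → H) × (ℕ → E)) :
    chainK S κ w = (κ w.2).map (step S w) := by
  unfold chainK
  rw [Kernel.map_apply _ (measurable_step hS), Kernel.prod_apply, Kernel.id_apply,
    Kernel.comap_apply, Measure.dirac_prod, Measure.map_map (measurable_step hS) (by fun_prop)]
  rfl

lemma chainK_markov [IsMarkovKernel κ] (hS : Continuous S) : IsMarkovKernel (chainK S κ) := by
  unfold chainK
  exact Kernel.IsMarkovKernel.map _ (measurable_step hS)

lemma measurable_step' (hS : Continuous S) (w : (ℕ → H) × (ℕ → E)) :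
    Measurable (step S w) := (measurable_step hS).comp measurable_prodMk_left

/-- The Markov operator. -/
noncomputable def Pop (S : H × E → H) (κ : Kernel (ℕ → E) E)
    (f : (ℕ → H) × (ℕ → E) → ℝ) (w : (ℕ → H) × (ℕ → E)) : ℝ := ∫ w', f w' ∂(chainK S κ w)

lemma Pop_apply [IsMarkovKernel κ] (hS : Continuous S) {f : (ℕ → H) × (ℕ → E) → ℝ}
    (hf : Measurable f) (w : (ℕ → H) × (ℕ → E)) :
    Pop S κ f w = ∫ y, f (step S w y) ∂(κ w.2) := by
  unfold Pop
  rw [chainK_apply hS, integral_map (measurable_step' hS w).aemeasurable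
    hf.aestronglyMeasurable]

/-- bounded measurable functions -/
def BM {α : Type*} [MeasurableSpace α] (f : α → ℝ) : Prop := Measurable f ∧ ∀ w, |f w| ≤ 1

lemma BM.integrable {α : Type*} [MeasurableSpace α] {f : α → ℝ} (hf : BM f) (μ : Measure α)
    [IsFiniteMeasure μ] : Integrable f μ :=
  Integrable.of_bound hf.1.aestronglyMeasurable 1 (Filter.Eventually.of_forall hf.2)

lemma BM.kernel {α β : Type*} [MeasurableSpace α] [MeasurableSpace β] {f : β → ℝ} (hf : BM f)
    (η : Kernel α β) [IsMarkovKernel η] : BM fun a => ∫ b, f b ∂(η a) := by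
  refine ⟨(hf.1.stronglyMeasurable.integral_kernel).measurable, fun a => ?_⟩
  have := norm_integral_le_of_norm_le_const (μ := η a) (f := f) (C := 1)
    (Filter.Eventually.of_forall hf.2)
  simpa using this

lemma BM.Pop [IsMarkovKernel κ] (hS : Continuous S) {f : (ℕ → H) × (ℕ → E) → ℝ} (hf : BM f) :
    BM (Pop S κ f) := by
  have := chainK_markov (κ := κ) hS
  exact hf.kernel _

lemma BM.iter [IsMarkovKernel κ] (hS : Continuous S) {f : (ℕ → H) × (ℕ → E) → ℝ} (hf : BM f)
    (n : ℕ) : BM ((EMix.Pop S κ)^[n] f) := by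
  induction n with
  | zero => exact hf
  | succ n ih => rw [Function.iterate_succ_apply']; exact ih.Pop hS

lemma NoiseData.step_good (D : NoiseData X K S ι R Sp κ ρ L) {w : (ℕ → H) × (ℕ → E)}
    (hw : w ∈ Good X Sp) : ∀ᵐ y ∂(κ w.2), step S w y ∈ Good X Sp := by
  filter_upwards [D.happ _ hw.2] with y hy
  refine ⟨fun i => ?_, hy⟩
  cases i with
  | zero => exact D.hinv _ (hw.1 0) _ (D.hsub _ hy 0)
  | succ i => exact hw.1 i

lemma NoiseData.Good_meas (D : NoiseData X K S ι R Sp κ ρ L) : MeasurableSet (Good X Sp) := by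
  have h1 : MeasurableSet {x : ℕ → H | ∀ i, x i ∈ X} := by
    have : {x : ℕ → H | ∀ i, x i ∈ X} = Set.pi univ (fun _ => X) := by ext; simp
    rw [this]
    exact MeasurableSet.univ_pi (fun _ => D.hX.isClosed.measurableSet)
  exact (measurable_fst h1).inter (measurable_snd D.hcl.measurableSet)

/-- The class of functions on which the Markov operator contracts. -/
def Cls (X : Set H) (Sp : Set (ℕ → E)) (ι a b : ℝ) (f : (ℕ → H) × (ℕ → E) → ℝ) : Prop :=
  (∀ w ∈ Good X Sp, ∀ w' ∈ Good X Sp, f w - f w' ≤ a) ∧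
  ∀ x ξ ξ', (x, ξ) ∈ Good X Sp → (x, ξ') ∈ Good X Sp → f (x, ξ) - f (x, ξ') ≤ b * dPast ι ξ ξ'

lemma exists_lo {f : (ℕ → H) × (ℕ → E) → ℝ} (hf : BM f) {a b : ℝ} (hc : Cls X Sp ι a b f)
    (hne : (Good X Sp).Nonempty) : ∃ lo, ∀ w ∈ Good X Sp, lo ≤ f w ∧ f w ≤ lo + a := by
  have hbd : BddBelow (f '' Good X Sp) := ⟨-1, by
    rintro _ ⟨w, -, rfl⟩; exact (abs_le.1 (hf.2 w)).1⟩
  refine ⟨sInf (f '' Good X Sp), fun w hw => ⟨csInf_le hbd ⟨w, hw, rfl⟩, ?_⟩⟩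
  have : f w - a ≤ sInf (f '' Good X Sp) := by
    refine le_csInf (hne.image f) ?_
    rintro _ ⟨w', hw', rfl⟩
    linarith [hc.1 w hw w' hw']
  linarith

lemma Pop_osc [IsMarkovKernel κ] (D : NoiseData X K S ι R Sp κ ρ L)
    {f : (ℕ → H) × (ℕ → E) → ℝ} (hf : BM f)
    {a b : ℝ} (hc : Cls X Sp ι a b f) :
    ∀ w ∈ Good X Sp, ∀ w' ∈ Good X Sp, Pop S κ f w - Pop S κ f w' ≤ a := by
  intro w hw w' hw'
  obtain ⟨lo, hlo⟩ := exists_lo hf hc ⟨w, hw⟩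
  rw [Pop_apply D.hS hf.1, Pop_apply D.hS hf.1]
  have hb : ∀ v, BM fun y => f (step S v y) := fun v =>
    ⟨hf.1.comp (measurable_step' D.hS v), fun y => hf.2 _⟩
  have h1 : ∫ y, f (step S w y) ∂(κ w.2) ≤ ∫ y, (lo + a) ∂(κ w.2) := by
    refine integral_mono_ae ((hb w).integrable _) (integrable_const _) ?_
    filter_upwards [D.step_good hw] with y hy using (hlo _ hy).2
  have h2 : ∫ y, lo ∂(κ w'.2) ≤ ∫ y, f (step S w' y) ∂(κ w'.2) := by
    refine integral_mono_ae (integrable_const _) ((hb w').integrable _) ?_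
    filter_upwards [D.step_good hw'] with y hy using (hlo _ hy).1
  simp at h1 h2
  linarith

lemma NoiseData.kappa_K (D : NoiseData X K S ι R Sp κ ρ L) {ξ : ℕ → E} (hξ : ξ ∈ Sp) :
    ∀ᵐ y ∂(κ ξ), y ∈ K := by
  filter_upwards [D.happ ξ hξ] with y hy using D.hsub _ hy 0

lemma NoiseData.rho_cont (D : NoiseData X K S ι R Sp κ ρ L) {ξ : ℕ → E} (hξ : ξ ∈ Sp) :
    Continuous (ρ ξ) := by
  have h := rho_continuousOn D.hι (R := R) (A := Sp) (fun ξ h n => D.hKR _ (D.hsub ξ h n)) D.hlip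
  rw [← continuousOn_univ]
  exact h.comp (f := fun y => (ξ, y)) (by fun_prop) (fun y _ => ⟨hξ, mem_univ _⟩)

/-- Contraction along the same history. -/
lemma Pop_same [IsMarkovKernel κ] [IsFiniteMeasureOnCompacts (volume : Measure E)]
    (D : NoiseData X K S ι R Sp κ ρ L)
    {f : (ℕ → H) × (ℕ → E) → ℝ} (hf : BM f)
    {a b : ℝ} (ha : 0 ≤ a) (hb : 0 ≤ b) (hc : Cls X Sp ι a b f) (x : ℕ → H) (ξ ξ' : ℕ → E)
    (hw : (x, ξ) ∈ Good X Sp) (hw' : (x, ξ') ∈ Good X Sp) :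
    Pop S κ f (x, ξ) - Pop S κ f (x, ξ') ≤
      (b * ι⁻¹ + a * (L * volume.real K)) * dPast ι ξ ξ' := by
  obtain ⟨lo, hlo⟩ := exists_lo hf hc ⟨_, hw⟩
  have hι0 : 0 < ι := by linarith [D.hι]
  rw [Pop_apply D.hS hf.1, Pop_apply D.hS hf.1]
  have hbm : ∀ v, BM fun y => f (step S v y) := fun v =>
    ⟨hf.1.comp (measurable_step' D.hS v), fun y => hf.2 _⟩
  set d := dPast ι ξ ξ' with hd
  have hd0 : 0 ≤ d := dPast_nonneg D.hι _ _
  let ν : Measure E := volume.withDensity fun y => ENNReal.ofReal (min (ρ ξ y) (ρ ξ' y))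
  have hν : ν ≤ κ ξ := by
    rw [D.hdens _ hw.2]
    exact withDensity_mono (Filter.Eventually.of_forall fun y =>
      ENNReal.ofReal_le_ofReal (min_le_left _ _))
  have hν' : ν ≤ κ ξ' := by
    rw [D.hdens _ hw'.2]
    exact withDensity_mono (Filter.Eventually.of_forall fun y =>
      ENNReal.ofReal_le_ofReal (min_le_right _ _))
  have : IsFiniteMeasure ν := ⟨(hν univ).trans_lt (measure_lt_top _ _)⟩
  have hmass : 1 - ν.real univ ≤ L * volume.real K * d := by
    have hKm := D.hK.isClosed.measurableSet
    have h1 : κ ξ K = 1 := by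
      rw [prob_compl_eq_zero_iff hKm |>.symm]
      exact D.kappa_K hw.2
    have h2 : κ ξ K ≤ ν univ + ENNReal.ofReal (L * d) * volume K := by
      rw [D.hdens _ hw.2, withDensity_apply _ hKm]
      calc ∫⁻ y in K, ENNReal.ofReal (ρ ξ y)
          ≤ ∫⁻ y in K, (ENNReal.ofReal (min (ρ ξ y) (ρ ξ' y)) + ENNReal.ofReal (L * d)) := by
            refine lintegral_mono (fun y => ?_)
            rw [← ENNReal.ofReal_add (le_min (D.hρ _ _) (D.hρ _ _)) (mul_nonneg D.hL hd0)]
            apply ENNReal.ofReal_le_ofReal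
            have := D.hlip ξ hw.2 ξ' hw'.2 y y
            simp only [sub_self, norm_zero, add_zero] at this
            rcases min_cases (ρ ξ y) (ρ ξ' y) with h | h
            · rw [h.1]; linarith [mul_nonneg D.hL hd0]
            · rw [h.1]; linarith [(abs_le.1 this).2]
        _ = ν K + ENNReal.ofReal (L * d) * volume K := by
            rw [lintegral_add_right _ measurable_const, withDensity_apply _ hKm]
            simp
        _ ≤ _ := by gcongr; exact subset_univ _
    rw [h1] at h2
    have hfin : volume K ≠ ⊤ := D.hK.measure_lt_top.ne
    have h3 := ENNReal.toReal_mono (by finiteness) h2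
    rw [ENNReal.toReal_add (by finiteness) (by finiteness), ENNReal.toReal_mul,
      ENNReal.toReal_ofReal (mul_nonneg D.hL hd0)] at h3
    simp only [ENNReal.toReal_one] at h3
    simp only [measureReal_def]
    linarith
  have key := minorize (Q := κ ξ) (Q' := κ ξ') ν (g := id) (g' := id) aemeasurable_id
    aemeasurable_id (by simpa using hν) (by simpa using hν')
    ((hbm (x, ξ)).integrable _) ((hbm (x, ξ')).integrable _) lo a (b * (ι⁻¹ * d))
    (by filter_upwards [D.step_good hw] with y hy using (hlo _ hy).2)
    (by filter_upwards [D.step_good hw'] with y hy using (hlo _ hy).1)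
    (by
      filter_upwards [hν.absolutelyContinuous.ae_le (D.step_good hw),
        hν'.absolutelyContinuous.ae_le (D.step_good hw')] with y hy hy'
      have := hc.2 _ _ _ hy hy'
      rw [dPast_append D.hι (fun n => D.hKR _ (D.hsub _ hw.2 n))
        (fun n => D.hKR _ (D.hsub _ hw'.2 n))] at this
      simp only [sub_self, norm_zero, zero_add] at this
      exact this)
  have hle1 : ν.real univ ≤ 1 := by
    have := ENNReal.toReal_mono (by finiteness) (hν univ)
    simpa [measureReal_def] using this
  have h5 : b * (ι⁻¹ * d) * ν.real univ ≤ b * (ι⁻¹ * d) := by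
    have : 0 ≤ b * (ι⁻¹ * d) := by positivity
    nlinarith
  have h6 : a * (1 - ν.real univ) ≤ a * (L * volume.real K * d) := by gcongr
  calc _ ≤ _ := key
    _ ≤ b * (ι⁻¹ * d) + a * (L * volume.real K * d) := by linarith
    _ = _ := by ring

end chain

end EMix

open MeasureTheory ProbabilityTheory Set Metric

namespace EMix

section geom
set_option linter.unusedSectionVars false
variable {H E : Type*}
    [NormedAddCommGroup H] [InnerProductSpace ℝ H] [FiniteDimensional ℝ H]
    [NormedAddCommGroup E] [InnerProductSpace ℝ E] [FiniteDimensional ℝ E]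
    [MeasureSpace E] [BorelSpace E] [(volume : Measure E).IsAddHaarMeasure]

lemma lip_volume {M : NNReal} {f : E → E} {s : Set E} (hf : LipschitzOnWith M f s) :
    volume (f '' s) ≤ (M : ENNReal) ^ (Module.finrank ℝ E : ℝ) * volume s := by
  have h := hf.hausdorffMeasure_image_le (d := (Module.finrank ℝ E : ℝ)) (by positivity)
  obtain ⟨c, hc⟩ : ∃ c : NNReal, (volume : Measure E) = c • μH[(Module.finrank ℝ E : ℝ)] :=
    ⟨_, Measure.isAddLeftInvariant_eq_smul _ _⟩
  rw [hc]
  simp only [Measure.smul_apply]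
  calc c • μH[(Module.finrank ℝ E : ℝ)] (f '' s)
      ≤ c • ((M : ENNReal) ^ (Module.finrank ℝ E : ℝ) * μH[(Module.finrank ℝ E : ℝ)] s) := by
        gcongr
    _ = _ := by rw [mul_smul_comm]

lemma local_inverse (S : H × E → H) (hS : ContDiff ℝ 2 S) (y₀ : E)
    (hsurj : Function.Surjective
      ((fderiv ℝ S (0, y₀)).comp (ContinuousLinearMap.inr ℝ H E))) {r : ℝ} (hr : 0 < r) :
    ∃ (A : E → H) (b₀ : E) (ε r' : ℝ) (g : H → E → E) (C : NNReal), 0 < ε ∧ 0 < r' ∧ C ≠ 0 ∧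
      ∀ v, ‖v‖ ≤ ε → ContinuousOn (g v) (ball b₀ r') ∧
        (∀ b ∈ ball b₀ r', ‖g v b - y₀‖ ≤ r ∧ S (v, g v b) = A b) ∧
        ∀ s : Set E, volume {b ∈ ball b₀ r' | g v b ∈ s} ≤ C * volume (s ∩ closedBall y₀ r) := by
  set A : E →L[ℝ] H := (fderiv ℝ S (0, y₀)).comp (ContinuousLinearMap.inr ℝ H E) with hA
  obtain ⟨T, hT⟩ : ∃ T : H →L[ℝ] E, ∀ h, A (T h) = h := by
    obtain ⟨T, hT⟩ := A.toLinearMap.exists_rightInverse_of_surjective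
      (LinearMap.range_eq_top.2 hsurj)
    exact ⟨LinearMap.toContinuousLinearMap T, fun h => LinearMap.congr_fun hT h⟩
  let Ψ : H × E → E := fun p => p.2 + T (S p - A p.2)
  have hΨA : ∀ p, A (Ψ p) = S p := by
    intro p
    simp only [Ψ, map_add, hT]
    abel
  have hΨc : ContDiff ℝ 2 Ψ := by
    refine contDiff_snd.add (T.contDiff.comp (hS.sub (A.contDiff.comp contDiff_snd)))
  let G : H × E → H × E := fun p => (p.1, Ψ p)
  have hGc : ContDiff ℝ 2 G := contDiff_fst.prodMk hΨc
  let B : H →L[ℝ] E := T.comp ((fderiv ℝ S (0, y₀)).comp (ContinuousLinearMap.inl ℝ H E))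
  let G' : (H × E) ≃L[ℝ] (H × E) :=
    ContinuousLinearEquiv.skewProd (ContinuousLinearEquiv.refl ℝ H)
      (ContinuousLinearEquiv.refl ℝ E) B
  have hG' : HasStrictFDerivAt G (G' : (H × E) →L[ℝ] (H × E)) (0, y₀) := by
    have h1 : HasStrictFDerivAt S (fderiv ℝ S (0, y₀)) (0, y₀) :=
      hS.contDiffAt.hasStrictFDerivAt (by norm_num)
    have h2 : HasStrictFDerivAt Ψ (ContinuousLinearMap.snd ℝ H E +
        T.comp (fderiv ℝ S (0, y₀) - A.comp (ContinuousLinearMap.snd ℝ H E))) (0, y₀) := by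
      refine hasStrictFDerivAt_snd.add ?_
      refine T.hasStrictFDerivAt.comp _ (h1.sub ?_)
      exact A.hasStrictFDerivAt.comp _ hasStrictFDerivAt_snd
    have h3 := hasStrictFDerivAt_fst.prodMk h2
    have hEq : (G' : (H × E) →L[ℝ] (H × E)) = (ContinuousLinearMap.fst ℝ H E).prod
        (ContinuousLinearMap.snd ℝ H E +
        T.comp (fderiv ℝ S (0, y₀) - A.comp (ContinuousLinearMap.snd ℝ H E))) := by
      refine ContinuousLinearMap.ext (fun p => ?_)
      refine Prod.ext rfl ?_
      change p.2 + T (fderiv ℝ S (0, y₀) (p.1, 0)) =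
        p.2 + T (fderiv ℝ S (0, y₀) p - fderiv ℝ S (0, y₀) (0, p.2))
      have hp : (p.1, (0 : E)) = p - (0, p.2) := by ext <;> simp
      rw [hp, map_sub]
    rw [hEq]
    exact h3
  let e := hG'.toOpenPartialHomeomorph G
  have he0 : (0, y₀) ∈ e.source := hG'.mem_toOpenPartialHomeomorph_source
  have hecoe : (e : H × E → H × E) = G := hG'.toOpenPartialHomeomorph_coe
  obtain ⟨M, U, hU, hML⟩ := ((hΨc.of_le (m := 1) (by norm_num)).contDiffAt
    (x := ((0 : H), y₀))).exists_lipschitzOnWith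
  obtain ⟨q, hq, hqU⟩ := Metric.mem_nhds_iff.1 hU
  have ht0 : G (0, y₀) ∈ e.target := by rw [← hecoe]; exact e.map_source he0
  have hsymm : e.symm (G (0, y₀)) = (0, y₀) := by rw [← hecoe]; exact e.left_inv he0
  have hcont : ContinuousAt e.symm (G (0, y₀)) := e.continuousAt_symm ht0
  have hnh : ∀ᶠ z in nhds (G (0, y₀)), e.symm z ∈ ball ((0 : H), y₀) (min q r) ∧ z ∈ e.target := by
    refine Filter.Eventually.and ?_ (e.open_target.mem_nhds ht0)
    apply hcont.eventually
    rw [hsymm]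
    exact ball_mem_nhds _ (lt_min hq hr)
  obtain ⟨r₁, hr₁, hball⟩ := Metric.eventually_nhds_iff.1 hnh
  let C : NNReal := (M ^ (Module.finrank ℝ E : ℝ)) + 1
  refine ⟨A, Ψ (0, y₀), r₁ / 2, r₁, fun v b => (e.symm (v, b)).2, C, by positivity, hr₁,
    by positivity, fun v hv => ?_⟩
  have hin : ∀ b ∈ ball (Ψ (0, y₀)) r₁,
      e.symm (v, b) ∈ ball ((0 : H), y₀) (min q r) ∧ (v, b) ∈ e.target := by
    intro b hb
    apply hball
    rw [Prod.dist_eq]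
    refine max_lt ?_ hb
    have : dist v 0 ≤ r₁ / 2 := by simpa using hv
    exact this.trans_lt (by linarith)
  have hG : ∀ b ∈ ball (Ψ (0, y₀)) r₁, (e.symm (v, b)).1 = v ∧ Ψ (v, (e.symm (v, b)).2) = b := by
    intro b hb
    have h := e.right_inv (hin b hb).2
    rw [hecoe] at h
    have h1 : (e.symm (v, b)).1 = v := congrArg Prod.fst h
    have h2 : Ψ (e.symm (v, b)) = b := congrArg Prod.snd h
    refine ⟨h1, ?_⟩
    conv_rhs => rw [← h2]
    congr 1
    exact Prod.ext h1.symm rfl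
  have hd : ∀ b ∈ ball (Ψ (0, y₀)) r₁, dist (e.symm (v, b)).2 y₀ < min q r := by
    intro b hb
    have := (hin b hb).1
    rw [mem_ball, Prod.dist_eq] at this
    exact (le_max_right _ _).trans_lt this
  refine ⟨?_, ?_, ?_⟩
  · refine continuous_snd.comp_continuousOn ?_
    exact e.continuousOn_symm.comp (by fun_prop) (fun b hb => (hin b hb).2)
  · intro b hb
    refine ⟨?_, ?_⟩
    · rw [← dist_eq_norm]
      exact ((hd b hb).trans_le (min_le_right _ _)).le
    · have h := (hG b hb).2
      have h' := hΨA (v, (e.symm (v, b)).2)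
      rw [h] at h'
      exact h'.symm
  · intro s
    by_cases hemp : (ball (Ψ (0, y₀)) r₁).Nonempty
    swap
    · rw [Set.not_nonempty_iff_eq_empty.1 hemp]; simp
    obtain ⟨b₁, hb₁⟩ := hemp
    have hvq : dist v 0 < q := by
      have := (hin b₁ hb₁).1
      rw [mem_ball, Prod.dist_eq] at this
      have h := (le_max_left _ _).trans_lt this
      rw [(hG b₁ hb₁).1] at h
      exact h.trans_le (min_le_left _ _)
    let s' := s ∩ closedBall y₀ r ∩ ball y₀ q
    have hl : LipschitzOnWith M (fun y => Ψ (v, y)) s' := by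
      have h1 : LipschitzWith 1 (fun y : E => (v, y)) := LipschitzWith.prodMk_left v
      have := hML.comp (h1.lipschitzOnWith (s := s')) ?_
      · rw [mul_one] at this; exact this
      · intro y hy
        apply hqU
        rw [mem_ball, Prod.dist_eq]
        exact max_lt hvq hy.2
    have hsub : {b ∈ ball (Ψ (0, y₀)) r₁ | (e.symm (v, b)).2 ∈ s} ⊆ (fun y => Ψ (v, y)) '' s' := by
      rintro b ⟨hb, hbs⟩
      refine ⟨(e.symm (v, b)).2, ⟨⟨hbs, ?_⟩, ?_⟩, (hG b hb).2⟩
      · exact ((hd b hb).trans_le (min_le_right _ _)).le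
      · exact (hd b hb).trans_le (min_le_left _ _)
    calc volume {b ∈ ball (Ψ (0, y₀)) r₁ | (e.symm (v, b)).2 ∈ s}
        ≤ volume ((fun y => Ψ (v, y)) '' s') := measure_mono hsub
      _ ≤ (M : ENNReal) ^ (Module.finrank ℝ E : ℝ) * volume s' := lip_volume hl
      _ ≤ C * volume (s ∩ closedBall y₀ r) := by
        gcongr
        · rw [← ENNReal.coe_rpow_of_nonneg _ (by positivity)]
          exact ENNReal.coe_le_coe.2 (by simp [C])
        · exact inter_subset_left

end geom

end EMix

open MeasureTheory ProbabilityTheory Set Metric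

namespace EMix

set_option linter.unusedSectionVars false

section coupling
variable {H E : Type*}
    [NormedAddCommGroup H] [InnerProductSpace ℝ H] [FiniteDimensional ℝ H]
    [MeasurableSpace H] [BorelSpace H]
    [NormedAddCommGroup E] [InnerProductSpace ℝ E] [FiniteDimensional ℝ E]
    [MeasureSpace E] [BorelSpace E] [(volume : Measure E).IsAddHaarMeasure]
    {X : Set H} {K : Set E} {S : H × E → H} {ι R : ℝ} {Sp : Set (ℕ → E)}
    {κ : Kernel (ℕ → E) E} {ρ : (ℕ → E) → E → ℝ} {L : ℝ}

/-- dependence on the last state only -/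
def Dep (f : (ℕ → H) × (ℕ → E) → ℝ) : Prop := ∀ x x' ξ, x 0 = x' 0 → f (x, ξ) = f (x', ξ)

lemma Dep.Pop [IsMarkovKernel κ] (hS : Continuous S) {f : (ℕ → H) × (ℕ → E) → ℝ}
    (hf : Measurable f) (hd : Dep f) : Dep (Pop S κ f) := by
  intro x x' ξ h
  rw [Pop_apply hS hf, Pop_apply hS hf]
  congr 1
  funext y
  refine hd _ _ _ ?_
  simp only [seqAppend, h]

lemma exists_pos_density [IsMarkovKernel κ] (D : NoiseData X K S ι R Sp κ ρ L) {ξ : ℕ → E}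
    (hξ : ξ ∈ Sp) : ∃ y ∈ K, 0 < ρ ξ y := by
  by_contra! hcon
  have hKm := D.hK.isClosed.measurableSet
  have h1 : κ ξ K = 1 := by
    rw [prob_compl_eq_zero_iff hKm |>.symm]
    exact D.kappa_K hξ
  rw [D.hdens _ hξ, withDensity_apply _ hKm] at h1
  have : ∫⁻ y in K, ENNReal.ofReal (ρ ξ y) = 0 := by
    rw [setLIntegral_congr_fun (g := fun _ => 0) hKm
      (fun y hy => ENNReal.ofReal_eq_zero.2 (hcon y hy))]
    simp
  rw [this] at h1
  exact zero_ne_one h1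

lemma local_coupling [IsMarkovKernel κ] (D : NoiseData X K S ι R Sp κ ρ L)
    (hSc : ContDiff ℝ 2 S) (h0 : (fun _ => (0 : E)) ∈ Sp)
    (hsurj : ∀ y ∈ K, Function.Surjective
      ((fderiv ℝ S (0, y)).comp (ContinuousLinearMap.inr ℝ H E))) {N : ℝ} (hN : 0 ≤ N) :
    ∃ ε τ c : ℝ, 0 < ε ∧ 0 < τ ∧ 0 < c ∧ c ≤ 1 ∧ ∀ a, 0 ≤ a → ∀ f, BM f →
      Cls X Sp ι a (a * N) f → Dep f → ∀ w ∈ Good X Sp, ∀ w' ∈ Good X Sp,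
      ‖w.1 0‖ ≤ ε → ‖w'.1 0‖ ≤ ε → dPast ι w.2 (fun _ => 0) ≤ τ → dPast ι w'.2 (fun _ => 0) ≤ τ →
      Pop S κ f w - Pop S κ f w' ≤ (1 - c) * a := by
  obtain ⟨y₀, hy₀, hpos⟩ := exists_pos_density D h0
  set ρ₀ := ρ (fun _ => 0) y₀ with hρ₀
  have hL := D.hL
  have hι0 : 0 < ι := by linarith [D.hι]
  set r : ℝ := min (ρ₀ / (4 * (L + 1))) (1 / (8 * (N + 1))) with hr
  have hrpos : 0 < r := lt_min (by positivity) (by positivity)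
  have hr1 : L * (r + r) ≤ ρ₀ / 2 := by
    have : r ≤ ρ₀ / (4 * (L + 1)) := min_le_left _ _
    rw [le_div_iff₀ (by positivity)] at this
    nlinarith
  have hr2 : N * (2 * r + 2 * r) ≤ 1 / 2 := by
    have : r ≤ 1 / (8 * (N + 1)) := min_le_right _ _
    rw [le_div_iff₀ (by positivity)] at this
    nlinarith
  obtain ⟨A, b₀, ε, r', g, C, hε, hr', hC, hg⟩ := local_inverse S hSc y₀ (hsurj y₀ hy₀) hrpos
  set c1 : NNReal := (ρ₀ / 2).toNNReal / C with hc1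
  have hc1pos : 0 < c1 := by
    have : 0 < (ρ₀ / 2).toNNReal := Real.toNNReal_pos.2 (by positivity)
    positivity
  have hc1C : (c1 : ENNReal) * C = ENNReal.ofReal (ρ₀ / 2) := by
    rw [← ENNReal.coe_mul, hc1, div_mul_cancel₀ _ hC]; rfl
  let ν : Measure E := c1 • (volume.restrict (ball b₀ r'))
  have hfinb : volume (ball b₀ r') < ⊤ := measure_ball_lt_top
  haveI : IsFiniteMeasure (volume.restrict (ball b₀ r')) := ⟨by simpa using hfinb⟩
  haveI : IsFiniteMeasure ν := by infer_instance
  have hmpos : 0 < ν.real univ := by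
    rw [measureReal_def]
    apply ENNReal.toReal_pos _ (by finiteness)
    simp only [ν, Measure.smul_apply, Measure.restrict_apply_univ]
    have h2 : 0 < volume (ball b₀ r') := measure_ball_pos _ _ hr'
    rw [ENNReal.smul_def, smul_eq_mul]
    exact mul_ne_zero (by simpa using hc1pos.ne') h2.ne'
  have haem : ∀ v, ‖v‖ ≤ ε → AEMeasurable (g v) ν := fun v hv =>
    ((hg v hv).1.aemeasurable measurableSet_ball).smul_measure _
  have hνle : ∀ v, ‖v‖ ≤ ε → ∀ ζ ∈ Sp, dPast ι ζ (fun _ => 0) ≤ r → ν.map (g v) ≤ κ ζ := by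
    intro v hv ζ hζ hζd
    refine Measure.le_iff.2 (fun s hs => ?_)
    rw [Measure.map_apply_of_aemeasurable (haem v hv) hs, D.hdens _ hζ, withDensity_apply _ hs]
    have e1 : ν (g v ⁻¹' s) ≤ c1 * (C * volume (s ∩ closedBall y₀ r)) := by
      simp only [ν, Measure.smul_apply, ENNReal.smul_def, smul_eq_mul]
      gcongr
      refine le_trans ?_ ((hg v hv).2.2 s)
      rw [Measure.restrict_apply₀' measurableSet_ball.nullMeasurableSet]
      exact measure_mono (fun b hb => ⟨hb.2, hb.1⟩)
    refine e1.trans ?_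
    rw [← mul_assoc, hc1C]
    calc ENNReal.ofReal (ρ₀ / 2) * volume (s ∩ closedBall y₀ r)
        = ∫⁻ _ in s ∩ closedBall y₀ r, ENNReal.ofReal (ρ₀ / 2) := by simp
      _ ≤ ∫⁻ y in s ∩ closedBall y₀ r, ENNReal.ofReal (ρ ζ y) := by
          refine setLIntegral_mono' (hs.inter isClosed_closedBall.measurableSet) (fun y hy => ?_)
          apply ENNReal.ofReal_le_ofReal
          have h1 := D.hlip ζ hζ _ h0 y y₀
          have h2 : ‖y - y₀‖ ≤ r := by
            have := hy.2
            rwa [mem_closedBall, dist_eq_norm] at this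
          have h3 : L * (dPast ι ζ (fun _ => 0) + ‖y - y₀‖) ≤ L * (r + r) := by gcongr
          have := (abs_le.1 h1).1
          linarith
      _ ≤ _ := lintegral_mono_set inter_subset_left
  refine ⟨ε, r, min (ν.real univ / 2) 1, hε, hrpos, lt_min (by positivity) one_pos,
    min_le_right _ _, ?_⟩
  intro a ha f hf hc hdep w hw w' hw' hwε hwε' hwτ hwτ'
  obtain ⟨lo, hlo⟩ := exists_lo hf hc ⟨_, hw⟩
  rw [Pop_apply D.hS hf.1, Pop_apply D.hS hf.1]
  have hbm : ∀ v, BM fun y => f (step S v y) := fun v =>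
    ⟨hf.1.comp (measurable_step' D.hS v), fun y => hf.2 _⟩
  have l1 := hνle _ hwε _ hw.2 hwτ
  have l2 := hνle _ hwε' _ hw'.2 hwτ'
  have key := minorize (Q := κ w.2) (Q' := κ w'.2) ν (haem _ hwε) (haem _ hwε') l1 l2
    ((hbm w).integrable _) ((hbm w').integrable _) lo a (a / 2)
    (by filter_upwards [D.step_good hw] with y hy using (hlo _ hy).2)
    (by filter_upwards [D.step_good hw'] with y hy using (hlo _ hy).1)
    (by
      have g1 := ae_of_ae_map (haem _ hwε) (l1.absolutelyContinuous.ae_le (D.step_good hw))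
      have g2 := ae_of_ae_map (haem _ hwε') (l2.absolutelyContinuous.ae_le (D.step_good hw'))
      have g3 : ∀ᵐ b ∂ν, b ∈ ball b₀ r' :=
        Measure.ae_smul_measure (ae_restrict_mem measurableSet_ball) _
      filter_upwards [g1, g2, g3] with b hb1 hb2 hb
      obtain ⟨p1, p2⟩ := (hg _ hwε).2.1 b hb
      obtain ⟨q1, q2⟩ := (hg _ hwε').2.1 b hb
      have e1 : f (step S w (g (w.1 0) b)) =
          f (seqAppend w'.1 (S (w'.1 0, g (w'.1 0) b)), seqAppend w.2 (g (w.1 0) b)) := by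
        apply hdep
        simp only [seqAppend, p2, q2]
      rw [e1]
      have := hc.2 (seqAppend w'.1 (S (w'.1 0, g (w'.1 0) b))) (seqAppend w.2 (g (w.1 0) b))
        (seqAppend w'.2 (g (w'.1 0) b)) ⟨hb2.1, hb1.2⟩ hb2
      refine this.trans ?_
      rw [dPast_append D.hι (fun n => D.hKR _ (D.hsub _ hw.2 n))
        (fun n => D.hKR _ (D.hsub _ hw'.2 n))]
      have t1 : ‖g (w.1 0) b - g (w'.1 0) b‖ ≤ 2 * r := by
        have : g (w.1 0) b - g (w'.1 0) b = (g (w.1 0) b - y₀) - (g (w'.1 0) b - y₀) := by abel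
        rw [this]
        exact (norm_sub_le _ _).trans (by linarith)
      have t2 := dPast_tri D.hι D.hR (fun n => D.hKR _ (D.hsub _ hw.2 n))
        (fun n => D.hKR _ (D.hsub _ hw'.2 n))
      have t3 : ι⁻¹ * dPast ι w.2 w'.2 ≤ 2 * r := by
        have := dPast_nonneg D.hι w.2 w'.2
        have hi1 : ι⁻¹ ≤ 1 := (inv_lt_one_of_one_lt₀ D.hι).le
        have hi0 : 0 < ι⁻¹ := by positivity
        nlinarith
      calc a * N * (‖g (w.1 0) b - g (w'.1 0) b‖ + ι⁻¹ * dPast ι w.2 w'.2)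
          ≤ a * N * (2 * r + 2 * r) := by gcongr
        _ = a * (N * (2 * r + 2 * r)) := by ring
        _ ≤ a * (1 / 2) := by gcongr
        _ = a / 2 := by ring)
  have hm : min (ν.real univ / 2) 1 ≤ ν.real univ / 2 := min_le_left _ _
  nlinarith

end coupling

end EMix

open MeasureTheory ProbabilityTheory Set Metric

namespace EMix

set_option linter.unusedSectionVars false

section rec
variable {H E : Type*}
    [NormedAddCommGroup H] [InnerProductSpace ℝ H] [FiniteDimensional ℝ H]
    [MeasurableSpace H] [BorelSpace H]
    [NormedAddCommGroup E] [InnerProductSpace ℝ E] [FiniteDimensional ℝ E]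
    [MeasureSpace E] [BorelSpace E] [(volume : Measure E).IsAddHaarMeasure]
    {X : Set H} {K : Set E} {S : H × E → H} {ι R : ℝ} {Sp : Set (ℕ → E)}
    {κ : Kernel (ℕ → E) E} {ρ : (ℕ → E) → E → ℝ} {L : ℝ}

/-- Iterated kernel. -/
noncomputable def piter (S : H × E → H) (κ : Kernel (ℕ → E) E) :
    ℕ → Kernel ((ℕ → H) × (ℕ → E)) ((ℕ → H) × (ℕ → E))
  | 0 => Kernel.id
  | n + 1 => piter S κ n ∘ₖ chainK S κ

lemma piter_markov [IsMarkovKernel κ] (hS : Continuous S) (n : ℕ) :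
    IsMarkovKernel (piter S κ n) := by
  have := chainK_markov (κ := κ) hS
  induction n with
  | zero => unfold piter; infer_instance
  | succ n ih => unfold piter; infer_instance

lemma piter_succ_apply [IsMarkovKernel κ] (hS : Continuous S) (n : ℕ) (w : (ℕ → H) × (ℕ → E))
    {A : Set ((ℕ → H) × (ℕ → E))} (hA : MeasurableSet A) :
    piter S κ (n + 1) w A = ∫⁻ y, piter S κ n (step S w y) A ∂(κ w.2) := by
  have h := Kernel.comp_apply' (piter S κ n) (chainK S κ) w hA
  rw [piter, h, chainK_apply hS, lintegral_map (Kernel.measurable_coe _ hA) (measurable_step' hS w)]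

lemma iter_eq_piter [IsMarkovKernel κ] (hS : Continuous S) {f : (ℕ → H) × (ℕ → E) → ℝ}
    (hf : BM f) (n : ℕ) (w : (ℕ → H) × (ℕ → E)) :
    (Pop S κ)^[n] f w = ∫ w', f w' ∂(piter S κ n w) := by
  have := chainK_markov (κ := κ) hS
  induction n generalizing w with
  | zero => simp [piter, Kernel.id_apply, integral_dirac' _ _ hf.1.stronglyMeasurable]
  | succ n ih =>
    have := piter_markov (κ := κ) hS n
    rw [Function.iterate_succ_apply', piter,
      Kernel.integral_comp (by
        have := piter_markov (κ := κ) hS (n + 1)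
        exact hf.integrable (piter S κ (n + 1) w))]
    unfold Pop
    congr 1
    funext w'
    exact ih w'

lemma piter_good [IsMarkovKernel κ] (D : NoiseData X K S ι R Sp κ ρ L) (n : ℕ)
    {w : (ℕ → H) × (ℕ → E)} (hw : w ∈ Good X Sp) : ∀ᵐ w' ∂(piter S κ n w), w' ∈ Good X Sp := by
  induction n generalizing w with
  | zero =>
    rw [piter, Kernel.id_apply]
    exact (ae_dirac_iff (p := fun w' => w' ∈ Good X Sp) D.Good_meas).2 hw
  | succ n ih =>
    change piter S κ (n + 1) w (Good X Sp)ᶜ = 0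
    rw [piter_succ_apply D.hS _ _ D.Good_meas.compl]
    rw [lintegral_congr_ae (g := fun _ => 0)]
    · simp
    · filter_upwards [D.step_good hw] with y hy using ih hy

/-- Several steps of the extended chain. -/
def steps (S : H × E → H) : (k : ℕ) → (ℕ → H) × (ℕ → E) → (Fin k → E) → (ℕ → H) × (ℕ → E)
  | 0, w, _ => w
  | k + 1, w, g => steps S k (step S w (g 0)) (fun i => g i.succ)

lemma measurable_steps (hS : Continuous S) (k : ℕ) :
    Measurable fun p : ((ℕ → H) × (ℕ → E)) × (Fin k → E) => steps S k p.1 p.2 := by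
  induction k with
  | zero => exact measurable_fst
  | succ k ih =>
    refine ih.comp (f := fun p : ((ℕ → H) × (ℕ → E)) × (Fin (k + 1) → E) =>
      (step S p.1 (p.2 0), fun i : Fin k => p.2 i.succ)) ?_
    refine Measurable.prodMk ?_ ?_
    · exact (measurable_step hS).comp (f := fun p : ((ℕ → H) × (ℕ → E)) × (Fin (k + 1) → E) =>
        (p.1, p.2 0)) (by fun_prop)
    · fun_prop

lemma steps_noise_old (k : ℕ) (w : (ℕ → H) × (ℕ → E)) (g : Fin k → E) (j : ℕ) :
    (steps S k w g).2 (k + j) = w.2 j := by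
  induction k generalizing w j with
  | zero => simp [steps]
  | succ k ih =>
    rw [steps, show k + 1 + j = k + (j + 1) by omega, ih]
    rfl

lemma steps_noise (k : ℕ) (w : (ℕ → H) × (ℕ → E)) (g : Fin k → E) (j : ℕ) (hj : j < k) :
    (steps S k w g).2 j = g ⟨k - 1 - j, by omega⟩ := by
  induction k generalizing w with
  | zero => omega
  | succ k ih =>
    rw [steps]
    rcases Nat.lt_succ_iff_lt_or_eq.1 hj with h | h
    · rw [ih _ _ h]
      congr 1
      ext
      simp
      omega
    · subst h
      have := steps_noise_old (S := S) j (step S w (g 0)) (fun i => g i.succ) 0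
      rw [add_zero] at this
      rw [this]
      simp [step, seqAppend]

lemma steps_cons (k : ℕ) (w : (ℕ → H) × (ℕ → E)) (g : Fin k → E) (n : ℕ)
    (hw : ∀ i < n, w.1 i = S (w.1 (i + 1), w.2 i)) (i : ℕ) (hi : i < n + k) :
    (steps S k w g).1 i = S ((steps S k w g).1 (i + 1), (steps S k w g).2 i) := by
  induction k generalizing w n with
  | zero => exact hw i hi
  | succ k ih =>
    rw [steps]
    refine ih (step S w (g 0)) _ (n + 1) (fun i hi => ?_) (by omega)
    cases i with
    | zero => rfl
    | succ i => exact hw i (by omega)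

lemma Qchain_le [IsMarkovKernel κ] (D : NoiseData X K S ι R Sp κ ρ L)
    {Q : (ℕ → E) → Measure E} (hQ : ∀ ξ ∈ Sp, Q ξ = κ ξ) (k : ℕ)
    {w : (ℕ → H) × (ℕ → E)} (hw : w ∈ Good X Sp)
    {A : Set ((ℕ → H) × (ℕ → E))} (hA : MeasurableSet A) :
    Qchain Q k w.2 {g | steps S k w g ∈ A} ≤ piter S κ k w A := by
  have hm : ∀ (k : ℕ) (w : (ℕ → H) × (ℕ → E)), MeasurableSet {g | steps S k w g ∈ A} :=
    fun k w => ((measurable_steps D.hS k).comp measurable_prodMk_left) hA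
  induction k generalizing w with
  | zero =>
    rw [Qchain, piter, Kernel.id_apply, Measure.dirac_apply' _ (hm 0 w), Measure.dirac_apply' _ hA]
    rfl
  | succ k ih =>
    rw [Qchain, piter_succ_apply D.hS _ _ hA, hQ _ hw.2]
    refine (Measure.bind_apply_le _ (hm _ _)).trans ?_
    refine lintegral_mono_ae ?_
    filter_upwards [D.step_good hw] with y hy
    rw [Measure.map_apply (by fun_prop) (hm _ _)]
    exact ih hy

end rec

end EMix

open MeasureTheory ProbabilityTheory Set Metric

namespace EMix

set_option linter.unusedSectionVars false

section contr
variable {H E : Type*}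
    [NormedAddCommGroup H] [InnerProductSpace ℝ H] [FiniteDimensional ℝ H]
    [MeasurableSpace H] [BorelSpace H]
    [NormedAddCommGroup E] [InnerProductSpace ℝ E] [FiniteDimensional ℝ E]
    [MeasureSpace E] [BorelSpace E] [(volume : Measure E).IsAddHaarMeasure]
    {X : Set H} {K : Set E} {S : H × E → H} {ι R : ℝ} {Sp : Set (ℕ → E)}
    {κ : Kernel (ℕ → E) E} {ρ : (ℕ → E) → E → ℝ} {L : ℝ}

lemma traj_mem (h0K : (0 : E) ∈ K) (hinv : ∀ u ∈ X, ∀ y ∈ K, S (u, y) ∈ X) {u : H} (hu : u ∈ X)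
    (n : ℕ) : traj S u (fun _ => 0) n ∈ X := by
  induction n with
  | zero => exact hu
  | succ n ih => exact hinv _ ih _ h0K

lemma traj_add (u : H) (a b : ℕ) :
    traj S u (fun _ => (0 : E)) (a + b) = traj S (traj S u (fun _ => 0) a) (fun _ => 0) b := by
  induction b with
  | zero => rfl
  | succ b ih => rw [← add_assoc, traj, ih, traj]

lemma traj_close (hX : IsCompact X) (hK : IsCompact K) (hS : Continuous S) (h0K : (0 : E) ∈ K)
    (hinv : ∀ u ∈ X, ∀ y ∈ K, S (u, y) ∈ X) (n : ℕ) : ∀ ε > 0, ∃ δ > 0, ∀ (x : ℕ → H) (ξ : ℕ → E),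
      (∀ i, x i ∈ X) → (∀ i, ξ i ∈ K) → (∀ i < n, x i = S (x (i + 1), ξ i)) →
      (∀ i < n, ‖ξ i‖ < δ) → ‖x 0 - traj S (x n) (fun _ => 0) n‖ < ε := by
  induction n with
  | zero =>
    intro ε hε
    exact ⟨1, one_pos, fun x ξ _ _ _ _ => by simpa [traj] using hε⟩
  | succ n ih =>
    intro ε hε
    have huc : UniformContinuousOn S (X ×ˢ K) :=
      (hX.prod hK).uniformContinuousOn_of_continuous hS.continuousOn
    obtain ⟨δ₁, hδ₁, h1⟩ := Metric.uniformContinuousOn_iff.1 huc ε hε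
    obtain ⟨δ₂, hδ₂, h2⟩ := ih δ₁ hδ₁
    refine ⟨min δ₁ δ₂, lt_min hδ₁ hδ₂, fun x ξ hx hξ hc hs => ?_⟩
    have h3 := h2 (fun i => x (i + 1)) (fun i => ξ (i + 1)) (fun i => hx _) (fun i => hξ _)
      (fun i hi => hc (i + 1) (by omega)) (fun i hi => (hs (i + 1) (by omega)).trans_le
        (min_le_right _ _))
    have h4 := hc 0 (by omega)
    rw [traj, h4, ← dist_eq_norm]
    refine h1 _ ⟨hx _, hξ _⟩ _ ⟨traj_mem h0K hinv (hx _) n, h0K⟩ ?_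
    rw [Prod.dist_eq]
    refine max_lt ?_ ?_
    · rw [dist_eq_norm]; exact h3
    · rw [dist_zero_right]; exact (hs 0 (by omega)).trans_le (min_le_left _ _)

/-- consistent histories with small recent noise -/
def Small (S : H × E → H) (n : ℕ) (δ : ℝ) : Set ((ℕ → H) × (ℕ → E)) :=
  {w | (∀ j < n, ‖w.2 j‖ < δ) ∧ ∀ i < n, w.1 i = S (w.1 (i + 1), w.2 i)}

lemma Small_meas (hS : Continuous S) (n : ℕ) (δ : ℝ) : MeasurableSet (Small (E := E) S n δ) := by
  refine MeasurableSet.inter (s₁ := {w : (ℕ → H) × (ℕ → E) | ∀ j < n, ‖w.2 j‖ < δ})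
    (s₂ := {w : (ℕ → H) × (ℕ → E) | ∀ i < n, w.1 i = S (w.1 (i + 1), w.2 i)}) ?_ ?_
  · simp only [ofPred_forall]
    refine MeasurableSet.iInter fun j => MeasurableSet.iInter fun _ => ?_
    exact measurableSet_lt (by fun_prop) measurable_const
  · simp only [ofPred_forall]
    refine MeasurableSet.iInter fun j => MeasurableSet.iInter fun _ => ?_
    exact measurableSet_eq_fun (by fun_prop) (hS.measurable.comp (by fun_prop))

lemma small_close (D : NoiseData X K S ι R Sp κ ρ L) (h0K : (0 : E) ∈ K)
    (hdiss : ∀ ε > 0, ∃ n : ℕ, 1 ≤ n ∧ ∀ u ∈ X, ‖traj S u (fun _ => (0 : E)) n‖ ≤ ε)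
    {ε τ : ℝ} (hε : 0 < ε) (hτ : 0 < τ) : ∃ n, 1 ≤ n ∧ ∃ δ > 0, ∀ w ∈ Good X Sp, w ∈ Small S n δ →
      ‖w.1 0‖ ≤ ε ∧ dPast ι w.2 (fun _ => 0) ≤ τ := by
  obtain ⟨n₀, δ₀, hδ₀, h0⟩ := dPast_small (E := E) D.hι D.hR hτ
  obtain ⟨n₁, hn₁, h1⟩ := hdiss (ε / 2) (by positivity)
  have hmul : ∀ q, ∀ u ∈ X, ‖traj S u (fun _ => (0 : E)) (n₁ * q + n₁)‖ ≤ ε / 2 := by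
    intro q u hu
    rw [traj_add]
    exact h1 _ (traj_mem h0K D.hinv hu _)
  obtain ⟨δ₁, hδ₁, h2⟩ := traj_close D.hX D.hK D.hS h0K D.hinv (n₁ * n₀ + n₁) (ε / 2)
    (by positivity)
  refine ⟨n₁ * n₀ + n₁, by omega, min δ₀ δ₁, lt_min hδ₀ hδ₁, fun w hw hs => ⟨?_, ?_⟩⟩
  · have h3 := h2 w.1 w.2 hw.1 (D.hsub _ hw.2) hs.2
      (fun i hi => (hs.1 i hi).trans_le (min_le_right _ _))
    have h4 := hmul n₀ _ (hw.1 (n₁ * n₀ + n₁))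
    have := norm_add_le (w.1 0 - traj S (w.1 (n₁ * n₀ + n₁)) (fun _ => 0) (n₁ * n₀ + n₁))
      (traj S (w.1 (n₁ * n₀ + n₁)) (fun _ => 0) (n₁ * n₀ + n₁))
    rw [sub_add_cancel] at this
    linarith
  · refine h0 (n₁ * n₀ + n₁) (by nlinarith) δ₀ le_rfl hδ₀.le _
      (fun k => D.hKR _ (D.hsub _ hw.2 k)) (fun k hk => ?_)
    exact ((hs.1 k hk).trans_le (min_le_left _ _)).le

lemma rec_piter [IsMarkovKernel κ] (D : NoiseData X K S ι R Sp κ ρ L)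
    {Q : (ℕ → E) → Measure E} (hQ : ∀ ξ ∈ Sp, Q ξ = κ ξ)
    (hrec : ∀ n : ℕ, 1 ≤ n → ∀ δ > 0, ∃ s : ℕ, 1 ≤ s ∧ ∃ c > 0,
      ∀ ξ ∈ Sp, ENNReal.ofReal c ≤ ((Qchain Q (s + n) ξ).map fun f => f ∘ Fin.natAdd s)
          {g : Fin n → E | ∀ i, ‖g i‖ < δ}) (n : ℕ) (hn : 1 ≤ n) (δ : ℝ) (hδ : 0 < δ) :
    ∃ k, ∃ c > 0, ∀ w ∈ Good X Sp, c ≤ (piter S κ k w).real (Small S n δ ∩ Good X Sp) := by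
  obtain ⟨s, hs, c, hc, h⟩ := hrec n hn δ hδ
  refine ⟨s + n, c, hc, fun w hw => ?_⟩
  have := piter_markov (κ := κ) D.hS (s + n)
  have h1 : piter S κ (s + n) w (Small S n δ ∩ Good X Sp) = piter S κ (s + n) w (Small S n δ) := by
    refine measure_congr ?_
    filter_upwards [piter_good D (s + n) hw] with w' hw'
    exact propext ⟨fun h => h.1, fun h => ⟨h, hw'⟩⟩
  have h2 : ENNReal.ofReal c ≤ piter S κ (s + n) w (Small S n δ ∩ Good X Sp) := by
    rw [h1]
    refine (h w.2 hw.2).trans (le_trans ?_ (Qchain_le D hQ (s + n) hw (Small_meas D.hS n δ)))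
    have hm : MeasurableSet {g : Fin n → E | ∀ i, ‖g i‖ < δ} := by
      simp only [ofPred_forall]
      exact MeasurableSet.iInter fun j => measurableSet_lt (by fun_prop) measurable_const
    rw [Measure.map_apply (by
      refine measurable_pi_lambda _ (fun i => ?_)
      exact measurable_pi_apply _) hm]
    refine measure_mono (fun g hg => ⟨fun j hj => ?_, fun i hi => ?_⟩)
    · rw [steps_noise _ _ _ _ (by omega)]
      have := hg ⟨n - 1 - j, by omega⟩
      convert this using 2
      simp only [Function.comp]
      congr 1
      ext
      simp
      omega
    · exact steps_cons (s + n) w g 0 (fun i hi => by omega) i (by omega)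
  have := ENNReal.toReal_mono (by finiteness) h2
  rwa [ENNReal.toReal_ofReal hc.le] at this

lemma zero_mem [IsMarkovKernel κ] (D : NoiseData X K S ι R Sp κ ρ L) (hne : (Good X Sp).Nonempty)
    (hr : ∀ n, 1 ≤ n → ∀ δ : ℝ, 0 < δ → ∃ k, ∃ c > 0, ∀ w ∈ Good X Sp,
      c ≤ (piter S κ k w).real (Small S n δ ∩ Good X Sp)) : (fun _ => (0 : E)) ∈ Sp := by
  obtain ⟨w, hw⟩ := hne
  have : ∀ n : ℕ, ∃ ξ ∈ Sp, ∀ j < n + 1, ‖ξ j‖ < 1 / ((n : ℝ) + 1) := by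
    intro n
    obtain ⟨k, c, hc, h⟩ := hr (n + 1) (by omega) (1 / ((n : ℝ) + 1)) (by positivity)
    have h1 := h w hw
    have : (Small S (n + 1) (1 / ((n : ℝ) + 1)) ∩ Good X Sp).Nonempty := by
      by_contra hcon
      rw [not_nonempty_iff_eq_empty] at hcon
      rw [hcon] at h1
      simp at h1
      linarith
    obtain ⟨w', h2, h3⟩ := this
    exact ⟨w'.2, h3.2, h2.1⟩
  choose ξ hξ hs using this
  refine D.hcl.mem_of_tendsto (b := Filter.atTop) (f := ξ) ?_ (Filter.Eventually.of_forall hξ)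
  rw [tendsto_pi_nhds]
  intro j
  rw [tendsto_zero_iff_norm_tendsto_zero]
  refine squeeze_zero' (Filter.Eventually.of_forall fun n => norm_nonneg _) ?_
    tendsto_one_div_add_atTop_nhds_zero_nat
  filter_upwards [Filter.eventually_ge_atTop j] with n hn
  exact (hs n j (by omega)).le

lemma two_set {α : Type*} [MeasurableSpace α] {Q Q' : Measure α} [IsProbabilityMeasure Q]
    [IsProbabilityMeasure Q'] {B : Set α} (hB : MeasurableSet B) {p : ℝ} (hp0 : 0 < p)
    (hp : p ≤ Q.real B) (hp' : p ≤ Q'.real B)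
    {h : α → ℝ} (hh : BM h) {lo a c : ℝ} (hQ : ∀ᵐ x ∂Q, lo ≤ h x ∧ h x ≤ lo + a)
    (hQ' : ∀ᵐ x ∂Q', lo ≤ h x ∧ h x ≤ lo + a) (hBb : ∀ x ∈ B, lo ≤ h x ∧ h x ≤ lo + a)
    (hc : ∀ x ∈ B, ∀ x' ∈ B, h x - h x' ≤ (1 - c) * a) :
    ∫ x, h x ∂Q - ∫ x, h x ∂Q' ≤ (1 - p * c) * a := by
  have hne : B.Nonempty := by
    by_contra hcon
    rw [not_nonempty_iff_eq_empty] at hcon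
    rw [hcon] at hp
    simp at hp
    linarith
  obtain ⟨x₀, hx₀⟩ := hne
  have hbd : BddBelow (h '' B) := ⟨lo, by rintro _ ⟨w, hw, rfl⟩; exact (hBb w hw).1⟩
  set l := sInf (h '' B) with hl
  have hl1 : ∀ x ∈ B, l ≤ h x := fun x hx => csInf_le hbd ⟨x, hx, rfl⟩
  have hl2 : lo ≤ l := le_csInf ⟨_, x₀, hx₀, rfl⟩ (by rintro _ ⟨w, hw, rfl⟩; exact (hBb w hw).1)
  have hl3 : ∀ x ∈ B, h x ≤ l + (1 - c) * a := by
    intro x hx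
    have : h x - (1 - c) * a ≤ l :=
      le_csInf ⟨_, x₀, hx₀, rfl⟩ (by rintro _ ⟨w, hw, rfl⟩; linarith [hc x hx w hw])
    linarith
  set U := min (l + (1 - c) * a) (lo + a) with hU
  have hU1 : ∀ x ∈ B, h x ≤ U := fun x hx => le_min (hl3 x hx) (hBb x hx).2
  have ind : ∀ (μ : Measure α) [IsProbabilityMeasure μ] (s t : ℝ),
      ∫ x, (s + B.indicator (fun _ => t) x) ∂μ = s + t * μ.real B := by
    intro μ _ s t
    rw [integral_add (integrable_const _) ((integrable_const _).indicator hB),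
      integral_indicator hB]
    simp [mul_comm]
  have h1 : ∫ x, h x ∂Q ≤ (lo + a) + (U - (lo + a)) * Q.real B := by
    rw [← ind]
    refine integral_mono_ae (hh.integrable _)
      ((integrable_const _).add ((integrable_const _).indicator hB)) ?_
    filter_upwards [hQ] with x hx
    by_cases hxB : x ∈ B
    · simp only [hxB, indicator_of_mem]; linarith [hU1 x hxB]
    · simp only [hxB, not_false_eq_true, indicator_of_notMem]; linarith [hx.2]
  have h2 : lo + (l - lo) * Q'.real B ≤ ∫ x, h x ∂Q' := by
    rw [← ind]
    refine integral_mono_ae ((integrable_const _).add ((integrable_const _).indicator hB))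
      (hh.integrable _) ?_
    filter_upwards [hQ'] with x hx
    by_cases hxB : x ∈ B
    · simp only [hxB, indicator_of_mem]; linarith [hl1 x hxB]
    · simp only [hxB, not_false_eq_true, indicator_of_notMem]; linarith [hx.1]
  have hU2 : U ≤ lo + a := min_le_right _ _
  have hU3 : U ≤ l + (1 - c) * a := min_le_left _ _
  have e1 : (U - (lo + a)) * Q.real B ≤ (U - (lo + a)) * p :=
    mul_le_mul_of_nonpos_left hp (by linarith)
  have e2 : (l - lo) * p ≤ (l - lo) * Q'.real B := mul_le_mul_of_nonneg_left hp' (by linarith)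
  nlinarith

end contr

end EMix

open MeasureTheory ProbabilityTheory Set Metric

namespace EMix

set_option linter.unusedSectionVars false

section decay
variable {H E : Type*}
    [NormedAddCommGroup H] [InnerProductSpace ℝ H] [FiniteDimensional ℝ H]
    [MeasurableSpace H] [BorelSpace H]
    [NormedAddCommGroup E] [InnerProductSpace ℝ E] [FiniteDimensional ℝ E]
    [MeasureSpace E] [BorelSpace E] [(volume : Measure E).IsAddHaarMeasure]
    {X : Set H} {K : Set E} {S : H × E → H} {ι R : ℝ} {Sp : Set (ℕ → E)}
    {κ : Kernel (ℕ → E) E} {ρ : (ℕ → E) → E → ℝ} {L : ℝ}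

/-- the weight of the same-history seminorm -/
noncomputable def wN (K : Set E) (ι L : ℝ) : ℝ := 2 * (L * volume.real K) / (1 - ι⁻¹)

lemma wN_nonneg (D : NoiseData X K S ι R Sp κ ρ L) : 0 ≤ wN K ι L := by
  have h1 : 0 < 1 - ι⁻¹ := by linarith [inv_lt_one_of_one_lt₀ D.hι]
  have := D.hL
  unfold wN
  positivity

lemma Cls_Pop [IsMarkovKernel κ] (D : NoiseData X K S ι R Sp κ ρ L)
    {f : (ℕ → H) × (ℕ → E) → ℝ} (hf : BM f) {a : ℝ} (ha : 0 ≤ a)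
    (hc : Cls X Sp ι a (a * wN K ι L) f) :
    Cls X Sp ι a ((1 + ι⁻¹) / 2 * (a * wN K ι L)) (Pop S κ f) := by
  refine ⟨Pop_osc D hf hc, fun x ξ ξ' hw hw' => ?_⟩
  have h1 : 0 < 1 - ι⁻¹ := by linarith [inv_lt_one_of_one_lt₀ D.hι]
  have hN := wN_nonneg D
  have := Pop_same D hf ha (by positivity) hc x ξ ξ' hw hw'
  refine this.trans (le_of_eq ?_)
  congr 1
  have : L * volume.real K = wN K ι L * (1 - ι⁻¹) / 2 := by
    unfold wN
    rw [div_mul_cancel₀ _ h1.ne']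
    ring
  rw [this]
  ring

lemma Cls_Pop' [IsMarkovKernel κ] (D : NoiseData X K S ι R Sp κ ρ L)
    {f : (ℕ → H) × (ℕ → E) → ℝ} (hf : BM f) {a : ℝ} (ha : 0 ≤ a)
    (hc : Cls X Sp ι a (a * wN K ι L) f) :
    Cls X Sp ι a (a * wN K ι L) (Pop S κ f) := by
  have h := Cls_Pop D hf ha hc
  refine ⟨h.1, fun x ξ ξ' hw hw' => (h.2 x ξ ξ' hw hw').trans ?_⟩
  have h1 : ι⁻¹ < 1 := inv_lt_one_of_one_lt₀ D.hι
  have hN := wN_nonneg D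
  have h2 : 0 ≤ a * wN K ι L := by positivity
  have h3 := dPast_nonneg D.hι ξ ξ'
  have h4 : 0 ≤ a * wN K ι L * dPast ι ξ ξ' := by positivity
  nlinarith

lemma Cls_iter [IsMarkovKernel κ] (D : NoiseData X K S ι R Sp κ ρ L)
    {f : (ℕ → H) × (ℕ → E) → ℝ} (hf : BM f) {a : ℝ} (ha : 0 ≤ a)
    (hc : Cls X Sp ι a (a * wN K ι L) f) (n : ℕ) :
    Cls X Sp ι a (a * wN K ι L) ((Pop S κ)^[n] f) := by
  induction n with
  | zero => exact hc
  | succ n ih => rw [Function.iterate_succ_apply']; exact Cls_Pop' D (hf.iter D.hS n) ha ih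

lemma Dep_iter [IsMarkovKernel κ] (D : NoiseData X K S ι R Sp κ ρ L)
    {f : (ℕ → H) × (ℕ → E) → ℝ} (hf : BM f) (hd : Dep f) (n : ℕ) : Dep ((Pop S κ)^[n] f) := by
  induction n with
  | zero => exact hd
  | succ n ih => rw [Function.iterate_succ_apply']; exact ih.Pop D.hS (hf.iter D.hS n).1

/-- The contraction property. -/
lemma contraction [IsMarkovKernel κ] (D : NoiseData X K S ι R Sp κ ρ L) (hSc : ContDiff ℝ 2 S)
    (hne : Sp.Nonempty) (h0X : (0 : H) ∈ X) (h0K : (0 : E) ∈ K)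
    (hdiss : ∀ ε > 0, ∃ n : ℕ, 1 ≤ n ∧ ∀ u ∈ X, ‖traj S u (fun _ => (0 : E)) n‖ ≤ ε)
    (hsurj : ∀ y ∈ K, Function.Surjective
      ((fderiv ℝ S (0, y)).comp (ContinuousLinearMap.inr ℝ H E)))
    {Q : (ℕ → E) → Measure E} (hQ : ∀ ξ ∈ Sp, Q ξ = κ ξ)
    (hrec : ∀ n : ℕ, 1 ≤ n → ∀ δ > 0, ∃ s : ℕ, 1 ≤ s ∧ ∃ c > 0,
      ∀ ξ ∈ Sp, ENNReal.ofReal c ≤ ((Qchain Q (s + n) ξ).map fun f => f ∘ Fin.natAdd s)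
          {g : Fin n → E | ∀ i, ‖g i‖ < δ}) :
    ∃ n₀ : ℕ, 1 ≤ n₀ ∧ ∃ θ : ℝ, 0 < θ ∧ θ < 1 ∧ ∀ a, 0 ≤ a → ∀ f, BM f → Dep f →
      Cls X Sp ι a (a * wN K ι L) f →
      Cls X Sp ι (θ * a) (θ * a * wN K ι L) ((Pop S κ)^[n₀] f) := by
  have hr := rec_piter D hQ hrec
  obtain ⟨ξ₀, hξ₀⟩ := hne
  have hgne : (Good X Sp).Nonempty := ⟨(fun _ => 0, ξ₀), fun _ => h0X, hξ₀⟩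
  have h0 := zero_mem D hgne hr
  have hN := wN_nonneg D
  obtain ⟨ε, τ, c, hε, hτ, hc, hc1, hcoup⟩ := local_coupling D hSc h0 hsurj hN
  obtain ⟨n, hn, δ, hδ, hsm⟩ := small_close D h0K hdiss hε hτ
  obtain ⟨k, p, hp, hpk⟩ := hr n hn δ hδ
  have h1 : ι⁻¹ < 1 := inv_lt_one_of_one_lt₀ D.hι
  have hι0 : 0 < ι⁻¹ := by have := D.hι; positivity
  have hpc : 0 < p * c := by positivity
  refine ⟨k + 1, by omega, max ((1 + ι⁻¹) / 2) (1 - p * c), lt_max_of_lt_left (by linarith),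
    max_lt (by linarith) (by linarith), fun a ha f hf hdep hcls => ⟨?_, ?_⟩⟩
  · intro w hw w' hw'
    have hPf := hf.Pop (κ := κ) D.hS
    rw [Function.iterate_succ_apply, iter_eq_piter D.hS hPf, iter_eq_piter D.hS hPf]
    have := piter_markov (κ := κ) D.hS k
    have hclsP := Cls_Pop' D hf ha hcls
    obtain ⟨lo, hlo⟩ := exists_lo hPf hclsP hgne
    have key := two_set (Q := piter S κ k w) (Q' := piter S κ k w')
      ((Small_meas D.hS n δ).inter D.Good_meas) hp (hpk w hw) (hpk w' hw') hPf (lo := lo) (a := a)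
      (c := c)
      (by filter_upwards [piter_good D k hw] with x hx using hlo x hx)
      (by filter_upwards [piter_good D k hw'] with x hx using hlo x hx)
      (fun x hx => hlo x hx.2)
      (fun x hx x' hx' => hcoup a ha f hf hcls hdep x hx.2 x' hx'.2 (hsm x hx.2 hx.1).1
        (hsm x' hx'.2 hx'.1).1 (hsm x hx.2 hx.1).2 (hsm x' hx'.2 hx'.1).2)
    refine key.trans ?_
    gcongr
    exact le_max_right _ _
  · intro x ξ ξ' hw hw'
    rw [Function.iterate_succ_apply']
    have := (Cls_Pop D (hf.iter D.hS k) ha (Cls_iter D hf ha hcls k)).2 x ξ ξ' hw hw'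
    refine this.trans ?_
    have h3 := dPast_nonneg D.hι ξ ξ'
    rw [mul_assoc (max _ _)]
    gcongr
    exact le_max_left _ _

lemma decay [IsMarkovKernel κ] (D : NoiseData X K S ι R Sp κ ρ L) {n₀ : ℕ} (hn₀ : 1 ≤ n₀) {θ : ℝ}
    (hθ : 0 < θ) (hθ1 : θ < 1) (hcon : ∀ a, 0 ≤ a → ∀ f, BM f → Dep f →
      Cls X Sp ι a (a * wN K ι L) f →
      Cls X Sp ι (θ * a) (θ * a * wN K ι L) ((Pop S κ)^[n₀] f)) :
    ∃ γ > 0, ∃ C > 0, ∀ f, BM f → Dep f → ∀ a, 0 ≤ a → Cls X Sp ι a (a * wN K ι L) f → ∀ k : ℕ,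
      ∀ w ∈ Good X Sp, ∀ w' ∈ Good X Sp,
      (Pop S κ)^[k] f w - (Pop S κ)^[k] f w' ≤ C * Real.exp (-γ * k) * a := by
  have hn0 : (0 : ℝ) < n₀ := by exact_mod_cast hn₀
  have hlog : Real.log θ < 0 := Real.log_neg hθ hθ1
  refine ⟨-Real.log θ / n₀, by apply div_pos <;> linarith, θ⁻¹, by positivity,
    fun f hf hdep a ha hcls k w hw w' hw' => ?_⟩
  have hq : ∀ q, Cls X Sp ι (θ ^ q * a) (θ ^ q * a * wN K ι L) ((Pop S κ)^[n₀ * q] f) := by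
    intro q
    induction q with
    | zero => simpa using hcls
    | succ q ih =>
      rw [mul_add, mul_one, add_comm (n₀ * q), Function.iterate_add_apply, pow_succ', mul_assoc θ]
      exact hcon _ (by positivity) _ (hf.iter D.hS _) (Dep_iter D hf hdep _) ih
  have h1 : (Pop S κ)^[k] f = (Pop S κ)^[k % n₀] ((Pop S κ)^[n₀ * (k / n₀)] f) := by
    rw [← Function.iterate_add_apply, Nat.mod_add_div]
  rw [h1]
  have h2 := (Cls_iter D (hf.iter D.hS _) (by positivity) (hq (k / n₀)) (k % n₀)).1 w hw w' hw'
  refine h2.trans ?_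
  gcongr
  have h3 : θ ^ (k / n₀) = Real.exp (Real.log θ * (k / n₀ : ℕ)) := by
    rw [Real.exp_mul, Real.exp_log hθ, Real.rpow_natCast]
  have h4 : θ⁻¹ = Real.exp (-Real.log θ) := by rw [Real.exp_neg, Real.exp_log hθ]
  rw [h3, h4, ← Real.exp_add]
  apply Real.exp_le_exp.2
  have h5 : (k : ℝ) / n₀ ≤ (k / n₀ : ℕ) + 1 := by
    rw [div_le_iff₀ hn0]
    have := Nat.lt_div_mul_add (a := k) (b := n₀) (by omega)
    have h6 : k ≤ (k / n₀ + 1) * n₀ := by rw [add_mul, one_mul]; omega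
    exact_mod_cast h6
  have h7 : -Real.log θ + -(-Real.log θ / n₀) * k = Real.log θ * (k / n₀ - 1) := by ring
  rw [h7]
  exact mul_le_mul_of_nonpos_left (by linarith) hlog.le

end decay

end EMix

open MeasureTheory ProbabilityTheory Set Metric

namespace EMix

set_option linter.unusedSectionVars false

section markov
variable {H E : Type*}
    [NormedAddCommGroup H] [InnerProductSpace ℝ H] [FiniteDimensional ℝ H]
    [MeasurableSpace H] [BorelSpace H]
    [NormedAddCommGroup E] [InnerProductSpace ℝ E] [FiniteDimensional ℝ E]
    [MeasureSpace E] [BorelSpace E] [(volume : Measure E).IsAddHaarMeasure]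
    {X : Set H} {K : Set E} {S : H × E → H} {ι R : ℝ} {Sp : Set (ℕ → E)}
    {κ : Kernel (ℕ → E) E} {ρ : (ℕ → E) → E → ℝ} {L : ℝ}

/-- The extended trajectory driven by a given past. -/
def Theta (S : H × E → H) (u : H) : ℕ → (ℕ → E) → (ℕ → H) × (ℕ → E)
  | 0, ξ => (fun _ => u, ξ)
  | k + 1, ξ => step S (Theta S u k (fun n => ξ (n + 1))) (ξ 0)

lemma Theta_snd (u : H) (k : ℕ) (ξ : ℕ → E) : (Theta S u k ξ).2 = ξ := by
  induction k generalizing ξ with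
  | zero => rfl
  | succ k ih =>
    simp only [Theta, step, ih]
    exact append_tail ξ

lemma Theta_fst (hinv : ∀ u ∈ X, ∀ y ∈ K, S (u, y) ∈ X) {u : H} (hu : u ∈ X) (k : ℕ) (ξ : ℕ → E)
    (hξ : ∀ n, ξ n ∈ K) : ∀ i, (Theta S u k ξ).1 i ∈ X := by
  induction k generalizing ξ with
  | zero => exact fun _ => hu
  | succ k ih =>
    intro i
    cases i with
    | zero => exact hinv _ (ih _ (fun n => hξ _) 0) _ (hξ 0)
    | succ i => exact ih _ (fun n => hξ _) i

lemma measurable_Theta (hS : Continuous S) (u : H) (k : ℕ) :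
    Measurable (Theta (E := E) S u k) := by
  induction k with
  | zero => exact Measurable.prodMk measurable_const measurable_id
  | succ k ih =>
    exact (measurable_step hS).comp (f := fun ξ : ℕ → E =>
      (Theta S u k (fun n => ξ (n + 1)), ξ 0))
      ((ih.comp (by fun_prop)).prodMk (measurable_pi_apply 0))

lemma Theta_good (D : NoiseData X K S ι R Sp κ ρ L) {u : H} (hu : u ∈ X) (k : ℕ) {ξ : ℕ → E}
    (hξ : ξ ∈ Sp) : Theta S u k ξ ∈ Good X Sp :=
  ⟨Theta_fst D.hinv hu k ξ (D.hsub ξ hξ), by rw [Theta_snd]; exact hξ⟩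

lemma Theta_traj (u : H) (z : ℤ → E) (n i : ℕ) (hi : i ≤ n) :
    (Theta S u n (fun j : ℕ => z (n - j))).1 i = traj S u (fun j => z (j : ℤ)) (n - i) := by
  induction n generalizing i with
  | zero => obtain rfl : i = 0 := by omega
            rfl
  | succ n ih =>
    have e : (fun j : ℕ => z (((n + 1 : ℕ) : ℤ) - ((j + 1 : ℕ) : ℤ))) = fun j : ℕ => z (n - j) := by
      funext j
      congr 1
      push_cast
      ring
    simp only [Theta, step]
    rw [e]
    cases i with
    | zero =>
      simp only [seqAppend]
      rw [ih 0 (by omega)]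
      simp [traj]
    | succ i =>
      simp only [seqAppend]
      rw [ih i (by omega)]
      congr 1
      omega

lemma Theta_integral_succ [IsMarkovKernel κ] (hS : Continuous S) {σ : Measure (ℕ → E)}
    [IsProbabilityMeasure σ] (hσ : (σ ⊗ₘ κ).map (fun p => seqAppend p.1 p.2) = σ)
    {f : (ℕ → H) × (ℕ → E) → ℝ} (hf : BM f) (u : H) (k : ℕ) :
    ∫ ξ, f (Theta S u (k + 1) ξ) ∂σ = ∫ ξ, Pop S κ f (Theta S u k ξ) ∂σ := by
  have hm : Measurable fun ξ => f (Theta S u (k + 1) ξ) := hf.1.comp (measurable_Theta hS u _)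
  have hB : BM fun p : (ℕ → E) × E => f (Theta S u (k + 1) (seqAppend p.1 p.2)) :=
    ⟨hm.comp measurable_append, fun p => hf.2 _⟩
  conv_lhs => rw [← hσ]
  rw [integral_map measurable_append.aemeasurable hm.aestronglyMeasurable,
    Measure.integral_compProd (hB.integrable _)]
  congr 1
  funext ξ
  rw [Pop_apply hS hf.1, Theta_snd]
  rfl

lemma Theta_integral [IsMarkovKernel κ] (hS : Continuous S) {σ : Measure (ℕ → E)}
    [IsProbabilityMeasure σ] (hσ : (σ ⊗ₘ κ).map (fun p => seqAppend p.1 p.2) = σ)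
    {f : (ℕ → H) × (ℕ → E) → ℝ} (hf : BM f) (u : H) (j k : ℕ) :
    ∫ ξ, f (Theta S u (j + k) ξ) ∂σ = ∫ ξ, (Pop S κ)^[k] f (Theta S u j ξ) ∂σ := by
  induction k generalizing f with
  | zero => rfl
  | succ k ih =>
    rw [← add_assoc, Theta_integral_succ hS hσ hf, ih (hf.Pop hS), Function.iterate_succ_apply]

/-- dependence on the last `r + 1` states only -/
def DepR (r : ℕ) (f : (ℕ → H) × (ℕ → E) → ℝ) : Prop :=
  ∀ x x' ξ, (∀ i ≤ r, x i = x' i) → f (x, ξ) = f (x', ξ)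

lemma DepR.iter [IsMarkovKernel κ] (hS : Continuous S) (r : ℕ) {f : (ℕ → H) × (ℕ → E) → ℝ}
    (hf : BM f) (hd : DepR r f) : Dep ((Pop S κ)^[r] f) := by
  induction r generalizing f with
  | zero => exact fun x x' ξ h => hd x x' ξ (fun i hi => by
      obtain rfl : i = 0 := by omega
      exact h)
  | succ r ih =>
    rw [Function.iterate_succ_apply]
    refine ih (hf.Pop hS) ?_
    intro x x' ξ h
    rw [Pop_apply hS hf.1, Pop_apply hS hf.1]
    congr 1
    funext y
    refine hd _ _ _ (fun i hi => ?_)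
    cases i with
    | zero => simp only [seqAppend, h 0 (by omega)]
    | succ i => exact h i (by omega)

/-- The mixing estimate for windows. -/
lemma window_diff [IsMarkovKernel κ] (D : NoiseData X K S ι R Sp κ ρ L) {γ C : ℝ} (hC : 0 < C)
    (hdec : ∀ f, BM f → Dep f → ∀ a, 0 ≤ a → Cls X Sp ι a (a * wN K ι L) f → ∀ k : ℕ,
      ∀ w ∈ Good X Sp, ∀ w' ∈ Good X Sp,
      (Pop S κ)^[k] f w - (Pop S κ)^[k] f w' ≤ C * Real.exp (-γ * k) * a)
    {σ : Measure (ℕ → E)}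
    [IsProbabilityMeasure σ] (hσ : (σ ⊗ₘ κ).map (fun p => seqAppend p.1 p.2) = σ)
    (hσS : ∀ᵐ ξ ∂σ, ξ ∈ Sp) (m : ℕ) {Γ : Set (Fin (m + 1) → H)} (hΓ : MeasurableSet Γ)
    {u u' : H} (hu : u ∈ X) (hu' : u' ∈ X) (k j j' : ℕ) :
    (σ.map (fun ξ => fun i : Fin (m + 1) => (Theta S u (j + (k + m)) ξ).1 (m - i))).real Γ -
    (σ.map (fun ξ => fun i : Fin (m + 1) => (Theta S u' (j' + (k + m)) ξ).1 (m - i))).real Γ ≤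
      C * Real.exp (-γ * k) := by
  let φ : (ℕ → H) × (ℕ → E) → (Fin (m + 1) → H) := fun w i => w.1 (m - i)
  have hφ : Measurable φ := by fun_prop
  let f : (ℕ → H) × (ℕ → E) → ℝ := fun w => Γ.indicator (fun _ => (1 : ℝ)) (φ w)
  have hfm : Measurable f := (measurable_const.indicator hΓ).comp hφ
  have hf01 : ∀ w, 0 ≤ f w ∧ f w ≤ 1 := by
    intro w
    by_cases h : φ w ∈ Γ <;> simp [f, h]
  have hf : BM f := ⟨hfm, fun w => abs_le.2 ⟨by linarith [(hf01 w).1], (hf01 w).2⟩⟩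
  have hdepR : DepR m f := by
    intro x x' ξ h
    have : φ (x, ξ) = φ (x', ξ) := funext fun i => h _ (by omega)
    simp only [f, this]
  have hcls : Cls X Sp ι 1 (1 * wN K ι L) f := by
    refine ⟨fun w _ w' _ => by linarith [(hf01 w).2, (hf01 w').1], fun x ξ ξ' _ _ => ?_⟩
    have h1 := dPast_nonneg D.hι ξ ξ'
    have h2 := wN_nonneg D
    have : f (x, ξ) = f (x, ξ') := rfl
    rw [this, sub_self]
    positivity
  have hIntg : ∀ v n, (σ.map (fun ξ => fun i : Fin (m + 1) => (Theta S v n ξ).1 (m - i))).real Γ =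
      ∫ ξ, f (Theta S v n ξ) ∂σ := by
    intro v n
    have hm : Measurable fun ξ : ℕ → E => φ (Theta S v n ξ) := hφ.comp (measurable_Theta D.hS v n)
    change (σ.map (fun ξ => φ (Theta S v n ξ))).real Γ = _
    rw [measureReal_def, Measure.map_apply hm hΓ]
    have : (fun ξ => f (Theta S v n ξ)) =
        ((fun ξ => φ (Theta S v n ξ)) ⁻¹' Γ).indicator (fun _ => (1 : ℝ)) := rfl
    rw [this, integral_indicator (hm hΓ)]
    simp [measureReal_def]
  rw [hIntg, hIntg, Theta_integral D.hS hσ hf, Theta_integral D.hS hσ hf, Function.iterate_add_apply]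
  set F := (Pop S κ)^[k] ((Pop S κ)^[m] f) with hF
  have hFB : BM F := (hf.iter D.hS m).iter D.hS k
  have hosc := hdec ((Pop S κ)^[m] f) (hf.iter D.hS m) (hdepR.iter D.hS m hf) 1 zero_le_one
    (Cls_iter D hf zero_le_one hcls m) k
  have hI : ∀ v n, Integrable (fun ξ => F (Theta S v n ξ)) σ := fun v n =>
    BM.integrable ⟨hFB.1.comp (measurable_Theta D.hS v n), fun ξ => hFB.2 _⟩ σ
  rw [← integral_sub (hI _ _) (hI _ _)]
  have : ∫ ξ, (F (Theta S u j ξ) - F (Theta S u' j' ξ)) ∂σ ≤ ∫ _, C * Real.exp (-γ * k) * 1 ∂σ := by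
    refine integral_mono_ae ((hI _ _).sub (hI _ _)) (integrable_const _) ?_
    filter_upwards [hσS] with ξ hξ
    exact hosc _ (Theta_good D hu j hξ) _ (Theta_good D hu' j' hξ)
  simpa using this

end markov

end EMix

open MeasureTheory ProbabilityTheory Set Metric

namespace EMix

set_option linter.unusedSectionVars false

section setup
variable {E : Type*}
    [NormedAddCommGroup E] [InnerProductSpace ℝ E] [FiniteDimensional ℝ E]
    [MeasureSpace E] [BorelSpace E] [(volume : Measure E).IsAddHaarMeasure]

lemma msupport_eq {α : Type*} [TopologicalSpace α] [MeasurableSpace α] (σ : Measure α) :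
    msupport σ = σ.support := by
  ext x
  rw [Measure.mem_support_iff_forall]
  constructor
  · intro h U hU
    obtain ⟨V, hVU, hV, hx⟩ := _root_.mem_nhds_iff.1 hU
    exact (h V hV hx).trans_le (measure_mono hVU)
  · intro h U hU hx
    exact h U (hU.mem_nhds hx)

/-- existence of a measurable version of the conditional law -/
lemma exists_kernel {Sp : Set (ℕ → E)} (hcl : IsClosed Sp) {ρ : (ℕ → E) → E → ℝ}
    (hρ : ContinuousOn (fun p : (ℕ → E) × E => ρ p.1 p.2) (Sp ×ˢ univ))
    (hprob : ∀ ξ ∈ Sp, IsProbabilityMeasure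
      ((volume : Measure E).withDensity fun y => ENNReal.ofReal (ρ ξ y))) :
    ∃ κ : Kernel (ℕ → E) E, IsMarkovKernel κ ∧
      ∀ ξ ∈ Sp, κ ξ = volume.withDensity fun y => ENNReal.ofReal (ρ ξ y) := by
  classical
  have hSm : MeasurableSet (Sp ×ˢ (univ : Set E)) := hcl.measurableSet.prod MeasurableSet.univ
  let f : (ℕ → E) → E → ENNReal := fun ξ y =>
    (Sp ×ˢ (univ : Set E)).piecewise (fun p => ENNReal.ofReal (ρ p.1 p.2)) (fun _ => 0) (ξ, y)
  have hf : Measurable (Function.uncurry f) :=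
    ContinuousOn.measurable_piecewise (ENNReal.continuous_ofReal.comp_continuousOn hρ)
      continuousOn_const hSm
  have hfe : ∀ ξ ∈ Sp, f ξ = fun y => ENNReal.ofReal (ρ ξ y) := by
    intro ξ hξ
    funext y
    simp [f, Set.piecewise, hξ]
  let κ₀ : Kernel (ℕ → E) E := Kernel.withDensity (Kernel.const _ volume) f
  let κ : Kernel (ℕ → E) E := Kernel.piecewise hcl.measurableSet κ₀
    (Kernel.const _ (Measure.dirac 0))
  have hκ : ∀ ξ ∈ Sp, κ ξ = volume.withDensity fun y => ENNReal.ofReal (ρ ξ y) := by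
    intro ξ hξ
    simp only [κ, Kernel.piecewise_apply, hξ, if_true]
    rw [Kernel.withDensity_apply _ hf, hfe ξ hξ, Kernel.const_apply]
  refine ⟨κ, ⟨fun ξ => ?_⟩, hκ⟩
  by_cases hξ : ξ ∈ Sp
  · rw [hκ ξ hξ]; exact hprob ξ hξ
  · simp only [κ, Kernel.piecewise_apply, hξ, if_false, Kernel.const_apply]
    infer_instance

lemma append_mem {σ : Measure (ℕ → E)} [IsProbabilityMeasure σ] {κ : Kernel (ℕ → E) E}
    [IsMarkovKernel κ] (hσ : (σ ⊗ₘ κ).map (fun p => seqAppend p.1 p.2) = σ)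
    {ρ : (ℕ → E) → E → ℝ}
    (hρ : ContinuousOn (fun p : (ℕ → E) × E => ρ p.1 p.2) (msupport σ ×ˢ univ))
    (hκ : ∀ ξ ∈ msupport σ, κ ξ = volume.withDensity fun y => ENNReal.ofReal (ρ ξ y))
    {ξ : ℕ → E} (hξ : ξ ∈ msupport σ) {y : E} (hy : 0 < ρ ξ y) : seqAppend ξ y ∈ msupport σ := by
  intro U hU hmem
  have h1 : {p : (ℕ → E) × E | seqAppend p.1 p.2 ∈ U} ∈ nhds (ξ, y) :=
    continuous_append.continuousAt.preimage_mem_nhds (hU.mem_nhds hmem)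
  have h2 : {p : (ℕ → E) × E | 0 < ρ p.1 p.2} ∈ nhdsWithin (ξ, y) (msupport σ ×ˢ univ) :=
    (hρ (ξ, y) ⟨hξ, mem_univ _⟩).preimage_mem_nhdsWithin (Ioi_mem_nhds hy)
  obtain ⟨W, hW, hWs⟩ := mem_nhdsWithin_iff_exists_mem_nhds_inter.1 h2
  obtain ⟨V, hV, V', hV', hVV⟩ := mem_nhds_prod_iff.1 (Filter.inter_mem h1 hW)
  obtain ⟨V₁, hV₁V, hV₁o, hξV⟩ := _root_.mem_nhds_iff.1 hV
  obtain ⟨V₂, hV₂V, hV₂o, hyV⟩ := _root_.mem_nhds_iff.1 hV'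
  by_contra hcon
  have h0 : σ U = 0 := by simpa using hcon
  have h3 : (σ ⊗ₘ κ) (V₁ ×ˢ V₂) = 0 := by
    refine measure_mono_null (t := (fun p : (ℕ → E) × E => seqAppend p.1 p.2) ⁻¹' U) ?_ ?_
    · rintro ⟨a, b⟩ ⟨ha, hb⟩
      exact (hVV ⟨hV₁V ha, hV₂V hb⟩).1
    · rw [← Measure.map_apply measurable_append hU.measurableSet, hσ, h0]
  rw [Measure.compProd_apply_prod hV₁o.measurableSet hV₂o.measurableSet,
    lintegral_eq_zero_iff (Kernel.measurable_coe _ hV₂o.measurableSet)] at h3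
  rw [Filter.EventuallyEq, ae_restrict_iff' hV₁o.measurableSet] at h3
  have h4 : ∀ᵐ ζ ∂σ, ζ ∈ msupport σ := by rw [msupport_eq]; exact Measure.support_mem_ae
  have h5 : σ V₁ = 0 := by
    have : ∀ᵐ ζ ∂σ, ζ ∉ V₁ := by
      filter_upwards [h3, h4] with ζ hζ hζs hζV
      have h6 := hζ hζV
      rw [hκ ζ hζs, withDensity_apply _ hV₂o.measurableSet] at h6
      have hpos : ∀ b ∈ V₂, 0 < ρ ζ b := fun b hb =>
        hWs ⟨(hVV (⟨hV₁V hζV, hV₂V hb⟩ : (ζ, b) ∈ V ×ˢ V')).2, hζs, mem_univ _⟩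
      have hmeas : Measurable fun b => ENNReal.ofReal (ρ ζ b) := by
        have : Continuous (ρ ζ) := by
          rw [← continuousOn_univ]
          exact hρ.comp (f := fun b => (ζ, b)) (by fun_prop) (fun b _ => ⟨hζs, mem_univ _⟩)
        exact (ENNReal.continuous_ofReal.comp this).measurable
      simp only [Pi.zero_apply] at h6
      rw [lintegral_eq_zero_iff hmeas, Filter.EventuallyEq,
        ae_restrict_iff' hV₂o.measurableSet] at h6
      have h7 : volume V₂ = 0 := by
        rw [measure_eq_zero_iff_ae_notMem]
        filter_upwards [h6] with b hb hbV
        have := hb hbV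
        simp only [Pi.zero_apply, ENNReal.ofReal_eq_zero] at this
        exact absurd (hpos b hbV) (not_lt.2 this)
      exact (hV₂o.measure_pos volume ⟨y, hyV⟩).ne' h7
    exact measure_eq_zero_iff_ae_notMem.2 this
  exact (hξ V₁ hV₁o hξV).ne' h5

lemma law_shift {Ω : Type*} {mΩ : MeasurableSpace Ω} (P : Measure Ω)
    (η : ℤ → Ω → E) (hmeas : ∀ k, Measurable (η k))
    (hstat : P.map (fun ω => fun k : ℤ => η (k + 1) ω)
      = P.map (fun ω => fun k : ℤ => η k ω)) (n : ℕ) :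
    P.map (fun ω => fun j : ℕ => η (n - j) ω) = P.map (fun ω => fun n : ℕ => η (-(n : ℤ)) ω) := by
  induction n with
  | zero => simp
  | succ n ih =>
    rw [← ih]
    have h := congrArg (fun μ => μ.map (fun (z : ℤ → E) (j : ℕ) => z (n - j))) hstat
    rw [Measure.map_map (by fun_prop) (by fun_prop), Measure.map_map (by fun_prop)
      (by fun_prop)] at h
    refine Eq.trans ?_ h
    congr 1
    funext ω j
    simp only [Function.comp]
    congr 1
    push_cast
    ring

lemma sigma_inv {Ω : Type*} {mΩ : MeasurableSpace Ω} (P : Measure Ω) [IsProbabilityMeasure P]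
    (η : ℤ → Ω → E) (hmeas : ∀ k, Measurable (η k))
    (hstat : P.map (fun ω => fun k : ℤ => η (k + 1) ω)
      = P.map (fun ω => fun k : ℤ => η k ω))
    {Q : (ℕ → E) → Measure E}
    (hcond : ∀ A : Set E, MeasurableSet A → ∀ B : Set (ℕ → E), MeasurableSet B →
      P {ω | (fun n : ℕ => η (-(n : ℤ)) ω) ∈ B ∧ η 1 ω ∈ A}
        = ∫⁻ ω in {ω | (fun n : ℕ => η (-(n : ℤ)) ω) ∈ B},
            Q (fun n : ℕ => η (-(n : ℤ)) ω) A ∂P)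
    {κ : Kernel (ℕ → E) E} [IsMarkovKernel κ]
    (hQ : ∀ ξ ∈ msupport (P.map (fun ω => fun n : ℕ => η (-(n : ℤ)) ω)), Q ξ = κ ξ) :
    ((P.map (fun ω => fun n : ℕ => η (-(n : ℤ)) ω)) ⊗ₘ κ).map (fun p => seqAppend p.1 p.2) =
      P.map (fun ω => fun n : ℕ => η (-(n : ℤ)) ω) := by
  have hpm : Measurable (fun ω => fun n : ℕ => η (-(n : ℤ)) ω) := by fun_prop
  set past : Ω → ℕ → E := fun ω => fun n : ℕ => η (-(n : ℤ)) ω with hpast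
  set σ := P.map past with hσ
  have : IsProbabilityMeasure σ := Measure.isProbabilityMeasure_map hpm.aemeasurable
  have h4 : ∀ᵐ ζ ∂σ, ζ ∈ msupport σ := by rw [msupport_eq]; exact Measure.support_mem_ae
  have h5 : ∀ᵐ ω ∂P, past ω ∈ msupport σ := ae_of_ae_map hpm.aemeasurable h4
  have hjm : Measurable fun ω => (past ω, η 1 ω) := hpm.prodMk (hmeas 1)
  have hjoint : P.map (fun ω => (past ω, η 1 ω)) = σ ⊗ₘ κ := by
    have : IsProbabilityMeasure (P.map (fun ω => (past ω, η 1 ω))) :=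
      Measure.isProbabilityMeasure_map hjm.aemeasurable
    refine Measure.ext_prod (fun {B A} hB hA => ?_)
    rw [Measure.map_apply hjm (hB.prod hA), Measure.compProd_apply_prod hB hA, hσ,
      setLIntegral_map hB (Kernel.measurable_coe _ hA) hpm]
    refine (hcond A hA B hB).trans ?_
    refine lintegral_congr_ae (ae_restrict_of_ae ?_)
    filter_upwards [h5] with ω hω
    rw [← hQ _ hω]
  rw [← hjoint, Measure.map_map measurable_append hjm]
  have h6 := law_shift P η hmeas hstat 1
  rw [← hpast, ← hσ] at h6
  rw [← h6]
  congr 1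
  funext ω j
  simp only [Function.comp]
  cases j with
  | zero => simp [seqAppend]
  | succ j => simp [seqAppend, past]

end setup

end EMix

open MeasureTheory ProbabilityTheory Set Metric

namespace EMix

set_option linter.unusedSectionVars false

section asm
variable {H E : Type*}
    [NormedAddCommGroup H] [InnerProductSpace ℝ H] [FiniteDimensional ℝ H]
    [MeasurableSpace H] [BorelSpace H]
    [NormedAddCommGroup E] [InnerProductSpace ℝ E] [FiniteDimensional ℝ E]
    [MeasureSpace E] [BorelSpace E] [(volume : Measure E).IsAddHaarMeasure]

lemma window_law {S : H × E → H} (hS : Continuous S)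
    {Ω : Type*} {mΩ : MeasurableSpace Ω} (P : Measure Ω) 
    (η : ℤ → Ω → E) (hmeas : ∀ k, Measurable (η k))
    (hstat : P.map (fun ω => fun k : ℤ => η (k + 1) ω)
      = P.map (fun ω => fun k : ℤ => η k ω)) (u : H) (m k : ℕ) :
    P.map (fun ω => fun i : Fin (m + 1) => traj S u (fun j => η (j : ℤ) ω) (k + i)) =
    (P.map (fun ω => fun n : ℕ => η (-(n : ℤ)) ω)).map
      (fun ξ => fun i : Fin (m + 1) => (Theta S u (k + m) ξ).1 (m - i)) := by
  rw [← law_shift P η hmeas hstat (k + m), Measure.map_map ?_ (by fun_prop)]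
  · congr 1
    funext ω i
    have h := Theta_traj (S := S) u (fun j => η j ω) (k + m) (m - i) (by omega)
    have e : k + m - (m - (i : ℕ)) = k + i := by omega
    rw [e] at h
    exact h.symm
  · refine measurable_pi_lambda _ fun i => ?_
    exact (measurable_pi_apply _).comp (measurable_fst.comp (measurable_Theta hS u _))

theorem window_estimate
    (X : Set H) (K : Set E) (hX : IsCompact X) (hK : IsCompact K)
    (h0X : (0 : H) ∈ X) (h0K : (0 : E) ∈ K)
    (S : H × E → H) (hS : ContDiff ℝ 2 S)
    (hinv : ∀ u ∈ X, ∀ η ∈ K, S (u, η) ∈ X)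
    (hdiss : ∀ ε > 0, ∃ n : ℕ, 1 ≤ n ∧ ∀ u ∈ X, ‖traj S u (fun _ => 0) n‖ ≤ ε)
    (hsurj : ∀ u ∈ X, ∀ η ∈ K,
      Function.Surjective ((fderiv ℝ S (u, η)).comp (ContinuousLinearMap.inr ℝ H E)))
    {Ω : Type*} {mΩ : MeasurableSpace Ω} (P : Measure Ω) [IsProbabilityMeasure P]
    (η : ℤ → Ω → E) (hmeas : ∀ k, Measurable (η k))
    (hstat : P.map (fun ω => fun k : ℤ => η (k + 1) ω)
      = P.map (fun ω => fun k : ℤ => η k ω))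
    (hsuppη : ∀ k : ℤ, ∀ᵐ ω ∂P, η k ω ∈ K)
    (Q : (ℕ → E) → Measure E)
    (hQprob : ∀ ξp ∈ msupport (P.map (fun ω => fun n : ℕ => η (-(n : ℤ)) ω)),
      IsProbabilityMeasure (Q ξp))
    (hcond : ∀ A : Set E, MeasurableSet A → ∀ B : Set (ℕ → E), MeasurableSet B →
      P {ω | (fun n : ℕ => η (-(n : ℤ)) ω) ∈ B ∧ η 1 ω ∈ A}
        = ∫⁻ ω in {ω | (fun n : ℕ => η (-(n : ℤ)) ω) ∈ B},
            Q (fun n : ℕ => η (-(n : ℤ)) ω) A ∂P)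
    (ι : ℝ) (hι : 1 < ι)
    (hLip : ∃ ρ : (ℕ → E) → E → ℝ, (∀ ξp y, 0 ≤ ρ ξp y) ∧
      (∃ L : ℝ, 0 ≤ L ∧
        ∀ ξp ∈ msupport (P.map (fun ω => fun n : ℕ => η (-(n : ℤ)) ω)),
        ∀ ξp' ∈ msupport (P.map (fun ω => fun n : ℕ => η (-(n : ℤ)) ω)),
        ∀ y y' : E, |ρ ξp y - ρ ξp' y'| ≤ L * (dPast ι ξp ξp' + ‖y - y'‖)) ∧
      ∀ ξp ∈ msupport (P.map (fun ω => fun n : ℕ => η (-(n : ℤ)) ω)),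
        Q ξp = volume.withDensity fun y => ENNReal.ofReal (ρ ξp y))
    (hrec : ∀ n : ℕ, 1 ≤ n → ∀ δ > 0, ∃ s : ℕ, 1 ≤ s ∧ ∃ c > 0,
      ∀ ξp ∈ msupport (P.map (fun ω => fun n : ℕ => η (-(n : ℤ)) ω)),
        ENNReal.ofReal c ≤ ((Qchain Q (s + n) ξp).map fun f => f ∘ Fin.natAdd s)
          {g : Fin n → E | ∀ i, ‖g i‖ < δ}) :
    ∃ γ > 0, ∃ C > 0, ∀ m : ℕ, ∀ Γ : Set (Fin (m + 1) → H), MeasurableSet Γ →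
      ∀ u ∈ X, ∀ u' ∈ X, ∀ k k' : ℕ, k ≤ k' →
      |(P.map (fun ω => fun i : Fin (m + 1) => traj S u (fun j => η (j : ℤ) ω) (k + i))).real Γ -
       (P.map (fun ω => fun i : Fin (m + 1) => traj S u' (fun j => η (j : ℤ) ω) (k' + i))).real Γ|
        ≤ C * Real.exp (-γ * k) := by
  have hpm : Measurable (fun ω => fun n : ℕ => η (-(n : ℤ)) ω) := by fun_prop
  have hwl := fun u m k => window_law hS.continuous P η hmeas hstat u m k
  have hinvσ := fun (κ : Kernel (ℕ → E) E) (_ : IsMarkovKernel κ) hQ => 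
    sigma_inv P η hmeas hstat hcond (κ := κ) hQ
  have hKσ : ∀ n : ℕ, (P.map (fun ω => fun n : ℕ => η (-(n : ℤ)) ω)) ((fun ξ => ξ n) ⁻¹' Kᶜ) = 0 := by
    intro n
    rw [Measure.map_apply hpm ((hK.measurableSet.compl).preimage (measurable_pi_apply n))]
    exact hsuppη _
  have hσp : IsProbabilityMeasure (P.map (fun ω => fun n : ℕ => η (-(n : ℤ)) ω)) :=
    Measure.isProbabilityMeasure_map hpm.aemeasurable
  clear hcond
  generalize P.map (fun ω => fun n : ℕ => η (-(n : ℤ)) ω) = σ at *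
  obtain ⟨ρ, hρ0, ⟨L, hL, hlip⟩, hdens⟩ := hLip
  obtain ⟨R, hKR⟩ := hK.isBounded.exists_norm_le
  have hR : 0 ≤ R := (norm_nonneg _).trans (hKR 0 h0K)
  have hsub : ∀ ξ ∈ msupport σ, ∀ n, ξ n ∈ K := by
    intro ξ hξ n
    by_contra hn
    have hop : IsOpen ((fun ξ : ℕ → E => ξ n) ⁻¹' Kᶜ) :=
      hK.isClosed.isOpen_compl.preimage (continuous_apply n)
    exact (hξ _ hop hn).ne' (hKσ n)
  have hcl : IsClosed (msupport σ) := by rw [msupport_eq]; exact Measure.isClosed_support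
  have hρc := rho_continuousOn hι (R := R) (A := msupport σ)
    (fun ξ hξ n => hKR _ (hsub ξ hξ n)) hlip
  obtain ⟨κ, hκM, hκ⟩ := exists_kernel hcl hρc
    (fun ξ hξ => by rw [← hdens ξ hξ]; exact hQprob ξ hξ)
  have hQκ : ∀ ξ ∈ msupport σ, Q ξ = κ ξ := fun ξ hξ => by rw [hdens ξ hξ, hκ ξ hξ]
  have hσ := hinvσ κ hκM hQκ
  have hσS : ∀ᵐ ξ ∂σ, ξ ∈ msupport σ := by rw [msupport_eq]; exact Measure.support_mem_ae
  have hne : (msupport σ).Nonempty := hσS.exists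
  have D : NoiseData X K S ι R (msupport σ) κ ρ L :=
    { hX := hX, hK := hK, hS := hS.continuous, hinv := hinv, hι := hι, hR := hR, hKR := hKR,
      hcl := hcl, hsub := hsub, hρ := hρ0, hL := hL, hlip := hlip, hdens := hκ
      happ := by
        intro ξ hξ
        have hc : Continuous (ρ ξ) := by
          rw [← continuousOn_univ]
          exact hρc.comp (f := fun b => (ξ, b)) (by fun_prop) (fun b _ => ⟨hξ, mem_univ _⟩)
        rw [hκ ξ hξ, ae_withDensity_iff (f := fun y => ENNReal.ofReal (ρ ξ y))
          (ENNReal.continuous_ofReal.comp hc).measurable]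
        refine Filter.Eventually.of_forall fun y hy => ?_
        refine append_mem hσ hρc hκ hξ ?_
        by_contra hcon
        exact hy (ENNReal.ofReal_eq_zero.2 (not_lt.1 hcon)) }
  obtain ⟨n₀, hn₀, θ, hθ, hθ1, hcon⟩ := contraction D hS hne h0X h0K hdiss
    (fun y hy => hsurj 0 h0X y hy) hQκ hrec
  obtain ⟨γ, hγ, C, hC, hdec⟩ := decay D hn₀ hθ hθ1 hcon
  refine ⟨γ, hγ, C, hC, fun m Γ hΓ u hu u' hu' k k' hkk => ?_⟩
  rw [hwl, hwl]
  have h1 := window_diff D hC hdec hσ hσS m hΓ hu hu' k 0 (k' - k)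
  have h2 := window_diff D hC hdec hσ hσS m hΓ hu' hu k (k' - k) 0
  have e : k' - k + (k + m) = k' + m := by omega
  rw [e, zero_add] at h1 h2
  rw [abs_le]
  constructor <;> linarith

end asm

end EMix

open MeasureTheory ProbabilityTheory Set Metric

namespace EMix

set_option linter.unusedSectionVars false

lemma portm_le {Z Y : Type*} [TopologicalSpace Z] [MeasurableSpace Z] [BorelSpace Z]
    [HasOuterApproxClosed Z]
    [TopologicalSpace Y] [MeasurableSpace Y] [BorelSpace Y] [TopologicalSpace.PseudoMetrizableSpace Y]
    {M : ℕ → ProbabilityMeasure Z} {μ : ProbabilityMeasure Z} {L : Filter ℕ} [L.NeBot]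
    (hM : Filter.Tendsto M L (nhds μ)) {π : Z → Y} (hπ : Continuous π)
    (W : Measure Y) [IsProbabilityMeasure W] {ε : ℝ}
    (hW : ∀ Γ : Set Y, MeasurableSet Γ → ∀ᶠ k in L, W.real Γ ≤ ((M k : Measure Z).map π).real Γ + ε)
    {Γ : Set Y} (hΓ : MeasurableSet Γ) : W.real Γ ≤ ((μ : Measure Z).map π).real Γ + ε := by
  have hcl : ∀ F : Set Y, IsClosed F → W.real F ≤ ((μ : Measure Z).map π).real F + ε := by
    intro F hF
    have h1 := ProbabilityMeasure.limsup_measure_closed_le_of_tendsto hM (hF.preimage hπ)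
    have h2 : ENNReal.ofReal (W.real F - ε) ≤ L.limsup fun i => (M i : Measure Z) (π ⁻¹' F) := by
      refine Filter.le_limsup_of_frequently_le ?_
      refine Filter.Eventually.frequently ?_
      filter_upwards [hW F hF.measurableSet] with k hk
      rw [measureReal_def, measureReal_def,
        Measure.map_apply hπ.measurable hF.measurableSet] at hk
      rw [measureReal_def]
      exact ENNReal.ofReal_le_of_le_toReal (by linarith)
    have h3 := h2.trans h1
    rw [measureReal_def (μ := Measure.map π _), Measure.map_apply hπ.measurable hF.measurableSet]
    rw [ENNReal.ofReal_le_iff_le_toReal (measure_ne_top _ _)] at h3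
    linarith
  have : IsProbabilityMeasure ((μ : Measure Z).map π) :=
    Measure.isProbabilityMeasure_map hπ.measurable.aemeasurable
  refine le_of_forall_pos_le_add fun δ hδ => ?_
  obtain ⟨F, hFΓ, hF, hlt⟩ := hΓ.exists_isClosed_lt_add (μ := W) (measure_ne_top _ _)
    (ε := ENNReal.ofReal δ) (by simpa using hδ)
  have h4 : W.real Γ ≤ W.real F + δ := by
    have := ENNReal.toReal_mono (by simp [ENNReal.add_eq_top]) hlt.le
    rwa [ENNReal.toReal_add (measure_ne_top _ _) (by simp), ENNReal.toReal_ofReal hδ.le] at this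
  have h5 : ((μ : Measure Z).map π).real F ≤ ((μ : Measure Z).map π).real Γ :=
    measureReal_mono hFΓ (measure_ne_top _ _)
  have := hcl F hF
  linarith

lemma portm {Z Y : Type*} [TopologicalSpace Z] [MeasurableSpace Z] [BorelSpace Z]
    [HasOuterApproxClosed Z]
    [TopologicalSpace Y] [MeasurableSpace Y] [BorelSpace Y] [TopologicalSpace.PseudoMetrizableSpace Y]
    {M : ℕ → ProbabilityMeasure Z} {μ : ProbabilityMeasure Z} {L : Filter ℕ} [L.NeBot]
    (hM : Filter.Tendsto M L (nhds μ)) {π : Z → Y} (hπ : Continuous π)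
    (W : Measure Y) [IsProbabilityMeasure W] {ε : ℝ}
    (hW : ∀ Γ : Set Y, MeasurableSet Γ → ∀ᶠ k in L, W.real Γ ≤ ((M k : Measure Z).map π).real Γ + ε)
    {Γ : Set Y} (hΓ : MeasurableSet Γ) : |W.real Γ - ((μ : Measure Z).map π).real Γ| ≤ ε := by
  have : IsProbabilityMeasure ((μ : Measure Z).map π) :=
    Measure.isProbabilityMeasure_map hπ.measurable.aemeasurable
  have h1 := portm_le hM hπ W hW hΓ
  have h2 := portm_le hM hπ W hW hΓ.compl
  rw [probReal_compl_eq_one_sub hΓ, probReal_compl_eq_one_sub hΓ] at h2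
  rw [abs_le]
  constructor <;> linarith

lemma shift_inv {H : Type*} [MeasurableSpace H] (μ : Measure (ℤ → H)) [IsProbabilityMeasure μ]
    (h : ∀ (a : ℤ) (m : ℕ), μ.map (fun f => fun i : Fin (m + 1) => f (a + 1 + (i : ℕ))) =
      μ.map (fun f => fun i : Fin (m + 1) => f (a + (i : ℕ)))) :
    μ.map (fun f n => f (n + 1)) = μ := by
  have hsm : Measurable (fun (f : ℤ → H) (n : ℤ) => f (n + 1)) := by fun_prop
  refine IsProjectiveLimit.unique (P := fun I : Finset ℤ => μ.map I.restrict) ?_ (fun I => rfl)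
  intro I
  rw [Measure.map_map (by fun_prop) hsm]
  obtain ⟨N, hN⟩ : ∃ N : ℕ, ∀ i ∈ I, -(N : ℤ) ≤ i ∧ i ≤ N := by
    refine ⟨I.sup Int.natAbs, fun i hi => ?_⟩
    have : Int.natAbs i ≤ I.sup Int.natAbs := Finset.le_sup (f := Int.natAbs) hi
    omega
  have hlt : ∀ i : I, ((i : ℤ) + N).toNat < 2 * N + 1 := fun i => by
    have := hN i i.2
    omega
  let g : (Fin (2 * N + 1) → H) → (I → H) := fun w i => w ⟨((i : ℤ) + N).toNat, hlt i⟩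
  have hg : Measurable g := by fun_prop
  have h1 := congrArg (fun ν => ν.map g) (h (-N) (2 * N))
  rw [Measure.map_map hg (by fun_prop), Measure.map_map hg (by fun_prop)] at h1
  refine Eq.trans ?_ (h1.trans ?_)
  · congr 1
    funext f i
    have := hN i i.2
    simp only [Function.comp, Finset.restrict, g]
    congr 1
    omega
  · congr 1
    funext f i
    have := hN i i.2
    simp only [Function.comp, Finset.restrict, g]
    congr 1
    omega

lemma traj_mem_X {H E : Type*} {X : Set H} {K : Set E} {S : H × E → H}
    (hinv : ∀ u ∈ X, ∀ η ∈ K, S (u, η) ∈ X) {u : H} (hu : u ∈ X) {ζ : ℕ → E} (hζ : ∀ n, ζ n ∈ K)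
    (n : ℕ) : traj S u ζ n ∈ X := by
  induction n with
  | zero => exact hu
  | succ n ih => exact hinv _ ih _ (hζ _)

section fin
variable {H E : Type*}
    [NormedAddCommGroup H] [InnerProductSpace ℝ H] [FiniteDimensional ℝ H]
    [MeasurableSpace H] [BorelSpace H]
    [NormedAddCommGroup E] [InnerProductSpace ℝ E] [FiniteDimensional ℝ E]
    [MeasurableSpace E] [BorelSpace E]

lemma measurable_traj {S : H × E → H} (hS : Continuous S) {Ω : Type*} {mΩ : MeasurableSpace Ω}
    {η : ℤ → Ω → E} (hmeas : ∀ k, Measurable (η k)) (u : H) (n : ℕ) :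
    Measurable fun ω => traj S u (fun j => η (j : ℤ) ω) n := by
  induction n with
  | zero => exact measurable_const
  | succ n ih => exact hS.measurable.comp (ih.prodMk (hmeas _))

theorem conclude {X : Set H} {K : Set E} (hX : IsCompact X) (h0X : (0 : H) ∈ X)
    {S : H × E → H} (hS : Continuous S) (hinv : ∀ u ∈ X, ∀ η ∈ K, S (u, η) ∈ X)
    {Ω : Type*} {mΩ : MeasurableSpace Ω} (P : Measure Ω) [IsProbabilityMeasure P]
    (η : ℤ → Ω → E) (hmeas : ∀ k, Measurable (η k))
    (hsuppη : ∀ k : ℤ, ∀ᵐ ω ∂P, η k ω ∈ K) {γ C : ℝ} (hγ : 0 < γ)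
    (hest : ∀ m : ℕ, ∀ Γ : Set (Fin (m + 1) → H), MeasurableSet Γ →
      ∀ u ∈ X, ∀ u' ∈ X, ∀ k k' : ℕ, k ≤ k' →
      |(P.map (fun ω => fun i : Fin (m + 1) => traj S u (fun j => η (j : ℤ) ω) (k + i))).real Γ -
       (P.map (fun ω => fun i : Fin (m + 1) => traj S u' (fun j => η (j : ℤ) ω) (k' + i))).real Γ|
        ≤ C * Real.exp (-γ * k)) :
    ∃ μ : Measure (ℤ → H), IsProbabilityMeasure μ ∧
      μ.map (fun f n => f (n + 1)) = μ ∧ μ {f | ∀ n : ℤ, f n ∈ X} = 1 ∧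
      ∀ m : ℕ, ∀ u₀ ∈ X, ∀ k : ℕ,
        ∀ Γ : Set (Fin (m + 1) → H), MeasurableSet Γ →
          |(P.map (fun ω => fun i : Fin (m + 1) =>
              traj S u₀ (fun j => η (j : ℤ) ω) (k + i)) Γ).toReal
            - (μ.map (fun f => fun i : Fin (m + 1) => f (i : ℕ)) Γ).toReal|
          ≤ C * Real.exp (-γ * k) := by
  have hXz : IsCompact {f : ℤ → H | ∀ n : ℤ, f n ∈ X} := isCompact_pi_infinite fun _ => hX
  have hmt : ∀ k : ℕ, Measurable fun ω => fun j : ℤ =>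
      traj S 0 (fun j => η (j : ℤ) ω) (k + j).toNat := fun k =>
    measurable_pi_lambda _ fun j => measurable_traj hS hmeas 0 _
  let M : ℕ → ProbabilityMeasure (ℤ → H) := fun k =>
    ⟨P.map (fun ω => fun j : ℤ => traj S 0 (fun j => η (j : ℤ) ω) (k + j).toNat),
      Measure.isProbabilityMeasure_map (hmt k).aemeasurable⟩
  have hMX : ∀ k, (M k : Measure (ℤ → H)) {f : ℤ → H | ∀ n : ℤ, f n ∈ X}ᶜ = 0 := by
    intro k
    change P.map _ _ = 0
    rw [Measure.map_apply (hmt k) hXz.measurableSet.compl]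
    have h1 : ∀ᵐ ω ∂P, ∀ j, η j ω ∈ K := ae_all_iff.2 hsuppη
    rw [measure_eq_zero_iff_ae_notMem]
    filter_upwards [h1] with ω hω hcon
    exact hcon fun n => traj_mem_X hinv h0X (fun j => hω _) _
  have hcomp := isCompact_setOfPred_probabilityMeasure_mass_eq_compl_isCompact_le
    (E := ℤ → H) (u := fun _ => 0) (K := fun _ => {f : ℤ → H | ∀ n : ℤ, f n ∈ X})
    tendsto_const_nhds (fun _ => hXz) (Or.inr fun _ _ _ => le_rfl)
  obtain ⟨μ, hμX, hμ⟩ := hcomp.ultrafilter_le_nhds ((Filter.hyperfilter ℕ).map M) (by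
    rw [Ultrafilter.coe_map, Filter.le_principal_iff, Filter.mem_map]
    refine Filter.Eventually.of_forall fun k n => ?_
    have := hMX k
    rw [← ProbabilityMeasure.null_iff_toMeasure_null] at this
    exact this.le)
  have hlim : Filter.Tendsto M (Filter.hyperfilter ℕ : Filter ℕ) (nhds μ) := hμ
  have hμX0 : (μ : Measure (ℤ → H)) {f : ℤ → H | ∀ n : ℤ, f n ∈ X}ᶜ = 0 := by
    rw [← ProbabilityMeasure.null_iff_toMeasure_null]
    exact le_antisymm (hμX 0) zero_le
  have hmw : ∀ (m k : ℕ) (u : H), Measurable fun ω => fun i : Fin (m + 1) =>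
      traj S u (fun j => η (j : ℤ) ω) (k + i) := fun m k u =>
    measurable_pi_lambda _ fun i => measurable_traj hS hmeas u _
  have hkey : ∀ (a : ℤ) (m : ℕ), ∀ u ∈ X, ∀ (k : ℕ) (Γ : Set (Fin (m + 1) → H)), MeasurableSet Γ →
      |(P.map (fun ω => fun i : Fin (m + 1) => traj S u (fun j => η (j : ℤ) ω) (k + i))).real Γ -
       ((μ : Measure (ℤ → H)).map (fun f => fun i : Fin (m + 1) => f (a + (i : ℕ)))).real Γ|
        ≤ C * Real.exp (-γ * k) := by
    intro a m u hu k Γ hΓ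
    have : IsProbabilityMeasure (P.map (fun ω => fun i : Fin (m + 1) =>
      traj S u (fun j => η (j : ℤ) ω) (k + i))) :=
      Measure.isProbabilityMeasure_map (hmw m k u).aemeasurable
    have hπ : Continuous (fun (f : ℤ → H) => fun i : Fin (m + 1) => f (a + (i : ℕ))) := by fun_prop
    refine portm hlim hπ _ (fun Γ hΓ => ?_) hΓ
    have hev : ∀ᶠ n in (Filter.hyperfilter ℕ : Filter ℕ), k + a.natAbs ≤ n := by
      refine Filter.Eventually.filter_mono ?_ (Filter.eventually_ge_atTop (k + a.natAbs))
      rw [← Nat.cofinite_eq_atTop]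
      exact Filter.hyperfilter_le_cofinite
    filter_upwards [hev] with n hn
    have e : ((M n : Measure (ℤ → H)).map (fun f => fun i : Fin (m + 1) => f (a + (i : ℕ)))) =
        P.map (fun ω => fun i : Fin (m + 1) =>
          traj S 0 (fun j => η (j : ℤ) ω) ((n + a).toNat + i)) := by
      change (P.map _).map _ = _
      rw [Measure.map_map hπ.measurable (hmt n)]
      congr 1
      funext ω i
      simp only [Function.comp]
      congr 1
      omega
    rw [e]
    have := (abs_le.1 (hest m Γ hΓ u hu 0 h0X k (n + a).toNat (by omega))).2
    linarith
  have hexp : Filter.Tendsto (fun k : ℕ => C * Real.exp (-γ * k)) Filter.atTop (nhds 0) := by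
    have h1 : Filter.Tendsto (fun k : ℕ => -γ * (k : ℝ)) Filter.atTop Filter.atBot :=
      Filter.Tendsto.const_mul_atTop_of_neg (by linarith) tendsto_natCast_atTop_atTop
    simpa using (Real.tendsto_exp_atBot.comp h1).const_mul C
  refine ⟨μ, inferInstance, shift_inv _ fun a m => ?_, ?_, fun m u hu k Γ hΓ => ?_⟩
  · have hp : ∀ b : ℤ, IsProbabilityMeasure ((μ : Measure (ℤ → H)).map
        (fun f => fun i : Fin (m + 1) => f (b + (i : ℕ)))) := fun b =>
      Measure.isProbabilityMeasure_map (Measurable.aemeasurable (by fun_prop))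
    have := hp a
    have := hp (a + 1)
    refine Measure.ext fun Γ hΓ => ?_
    have h0 : |((μ : Measure (ℤ → H)).map
          (fun f => fun i : Fin (m + 1) => f (a + 1 + (i : ℕ)))).real Γ -
        ((μ : Measure (ℤ → H)).map (fun f => fun i : Fin (m + 1) => f (a + (i : ℕ)))).real Γ| ≤
        0 + 0 := by
      refine ge_of_tendsto (hexp.add hexp) (Filter.Eventually.of_forall fun k => ?_)
      have h1 := abs_le.1 (hkey a m 0 h0X k Γ hΓ)
      have h2 := abs_le.1 (hkey (a + 1) m 0 h0X k Γ hΓ)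
      rw [abs_le]
      constructor <;> linarith [h1.1, h1.2, h2.1, h2.2]
    rw [add_zero, abs_nonpos_iff, sub_eq_zero] at h0
    exact (ENNReal.toReal_eq_toReal_iff' (measure_ne_top _ _) (measure_ne_top _ _)).1 h0
  · exact (prob_compl_eq_zero_iff hXz.measurableSet).1 hμX0
  · have h1 := hkey 0 m u hu k Γ hΓ
    simp only [zero_add] at h1
    exact h1

end fin

end EMix

/-- **Theorem 3.1 (exponential mixing in total variation for RDS driven by a stationary
noise)**.  Let `X ⊂ H`, `K ⊂ E` be compacts containing the origins and `S : H × E → H` a `C²`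
map with `S(0,0) = 0`, `S(X × K) ⊂ X`, satisfying the Dissipativity and Linearised
controllability hypotheses.  Let `{η_k, k ∈ ℤ}` be a stationary process in `E` whose laws are
supported by `K`, with conditional law `Q(ξp;·)` of `η₁` given the past `ξp`, chosen continuous
(Feller property), and assume the Lipschitz regularity and Recurrence-to-zero hypotheses.
Then there are a shift-invariant measure `μ` on `X^ℤ` and `γ > 0` such that, for every `m`,
`‖D([u_k, …, u_{k+m}]) − μ_m‖_var ≤ C_m e^{−γk}` for every initial point `u₀ ∈ X`. -/
theorem exponential_mixing_stationary_noise
    {H E : Type*}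
    [NormedAddCommGroup H] [InnerProductSpace ℝ H] [FiniteDimensional ℝ H]
    [MeasurableSpace H] [BorelSpace H]
    [NormedAddCommGroup E] [InnerProductSpace ℝ E] [FiniteDimensional ℝ E]
    [MeasureSpace E] [BorelSpace E] [(volume : Measure E).IsAddHaarMeasure]
    (X : Set H) (K : Set E) (hX : IsCompact X) (hK : IsCompact K)
    (h0X : (0 : H) ∈ X) (h0K : (0 : E) ∈ K)
    (S : H × E → H) (hS : ContDiff ℝ 2 S) (hS0 : S (0, 0) = 0)
    (hinv : ∀ u ∈ X, ∀ η ∈ K, S (u, η) ∈ X)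
    -- Dissipativity
    (hdiss : ∀ ε > 0, ∃ n : ℕ, 1 ≤ n ∧ ∀ u ∈ X, ‖traj S u (fun _ => 0) n‖ ≤ ε)
    -- Linearised controllability
    (hsurj : ∀ u ∈ X, ∀ η ∈ K,
      Function.Surjective ((fderiv ℝ S (u, η)).comp (ContinuousLinearMap.inr ℝ H E)))
    -- the stationary noise
    {Ω : Type*} {mΩ : MeasurableSpace Ω} (P : Measure Ω) [IsProbabilityMeasure P]
    (η : ℤ → Ω → E) (hmeas : ∀ k, Measurable (η k))
    (hstat : P.map (fun ω => fun k : ℤ => η (k + 1) ω)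
      = P.map (fun ω => fun k : ℤ => η k ω))
    (hsuppη : ∀ k : ℤ, ∀ᵐ ω ∂P, η k ω ∈ K)
    -- the conditional law `Q` of `η 1` given the past `𝛈_0 = (η_k, k ≤ 0)`
    (Q : (ℕ → E) → Measure E)
    (hQprob : ∀ ξp ∈ msupport (P.map (fun ω => fun n : ℕ => η (-(n : ℤ)) ω)),
      IsProbabilityMeasure (Q ξp))
    (hcond : ∀ A : Set E, MeasurableSet A → ∀ B : Set (ℕ → E), MeasurableSet B →
      P {ω | (fun n : ℕ => η (-(n : ℤ)) ω) ∈ B ∧ η 1 ω ∈ A}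
        = ∫⁻ ω in {ω | (fun n : ℕ => η (-(n : ℤ)) ω) ∈ B},
            Q (fun n : ℕ => η (-(n : ℤ)) ω) A ∂P)
    -- Feller property: `ξp ↦ Q(ξp;·)` is continuous on `ℰ = supp σ`
    (hFeller : ∀ f : BoundedContinuousFunction E ℝ,
      ContinuousOn (fun ξp => ∫ y, f y ∂(Q ξp))
        (msupport (P.map (fun ω => fun n : ℕ => η (-(n : ℤ)) ω))))
    -- Lipschitz regularity
    (ι : ℝ) (hι : 1 < ι)
    (hLip : ∃ ρ : (ℕ → E) → E → ℝ, (∀ ξp y, 0 ≤ ρ ξp y) ∧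
      (∃ L : ℝ, 0 ≤ L ∧
        ∀ ξp ∈ msupport (P.map (fun ω => fun n : ℕ => η (-(n : ℤ)) ω)),
        ∀ ξp' ∈ msupport (P.map (fun ω => fun n : ℕ => η (-(n : ℤ)) ω)),
        ∀ y y' : E, |ρ ξp y - ρ ξp' y'| ≤ L * (dPast ι ξp ξp' + ‖y - y'‖)) ∧
      ∀ ξp ∈ msupport (P.map (fun ω => fun n : ℕ => η (-(n : ℤ)) ω)),
        Q ξp = volume.withDensity fun y => ENNReal.ofReal (ρ ξp y))
    -- Recurrence to zero
    (hrec : ∀ n : ℕ, 1 ≤ n → ∀ δ > 0, ∃ s : ℕ, 1 ≤ s ∧ ∃ c > 0,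
      ∀ ξp ∈ msupport (P.map (fun ω => fun n : ℕ => η (-(n : ℤ)) ω)),
        ENNReal.ofReal c ≤ ((Qchain Q (s + n) ξp).map fun f => f ∘ Fin.natAdd s)
          {g : Fin n → E | ∀ i, ‖g i‖ < δ}) :
    ∃ (μ : Measure (ℤ → H)) (γ : ℝ), IsProbabilityMeasure μ ∧ 0 < γ ∧
      μ.map (fun f n => f (n + 1)) = μ ∧ μ {f | ∀ n : ℤ, f n ∈ X} = 1 ∧
      ∀ m : ℕ, ∃ C > 0, ∀ u₀ ∈ X, ∀ k : ℕ,
        ∀ Γ : Set (Fin (m + 1) → H), MeasurableSet Γ →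
          |(P.map (fun ω => fun i : Fin (m + 1) =>
              traj S u₀ (fun j => η (j : ℤ) ω) (k + i)) Γ).toReal
            - (μ.map (fun f => fun i : Fin (m + 1) => f (i : ℕ)) Γ).toReal|
          ≤ C * Real.exp (-γ * k) := by
  obtain ⟨γ, hγ, C, hC, hest⟩ := EMix.window_estimate X K hX hK h0X h0K S hS hinv hdiss hsurj P η
    hmeas hstat hsuppη Q hQprob hcond ι hι hLip hrec
  obtain ⟨μ, hμ, hsh, hμX, hfin⟩ := EMix.conclude hX h0X hS.continuous hinv P η hmeas hsuppη hγ hest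
  exact ⟨μ, γ, hμ, hγ, hsh, hμX, fun m => ⟨C, hC, hfin m⟩⟩
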